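/- For every ε > 0 there is a constant C(ε) such that for all T ≥ 10, with y = T^{3/4}: Σ over quadruples of positive integers n₁, n₂, n₃, n₄ ≤ y with √n₁ + √n₂ + √n₃ − √n₄ ≠ 0 of d(n₁)d(n₂)d(n₃)d(n₄)/(n₁n₂n₃n₄)^{3/4} · min(T², T^{3/2}/|√n₁ + √n₂ + √n₃ − √n₄|) ≤ C(ε) · T^{2−1/8+ε}. -/

import Mathlib

open Real MeasureTheory Finset
open scoped Classical

noncomputable section

/-!
Write `T = τ ^ 8`, so that all variables are at most `τ ^ 6`, and split the sum into dyadic boxes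
with block sizes `A₁, A₂, A₃, A₄`. As there are `O(log T) ^ 4` boxes, it is enough to show that, up
to factors `T ^ ε`, the sum of `min (τ ^ 4) (1 / |Δ|)` over a box, where `Δ = √a + √b + √c - √d`, is
at most `τ ^ 3 (A₁ A₂ A₃ A₄) ^ (3/4)`. Let `A₁ ≤ A₂ ≤ A₃`, and let `α ≤ β ≤ γ` be their twelfth
roots. If `A₃` and `A₄` are not comparable, `Δ` is as large as its largest term. Otherwise there are
two complementary methods.

* Multiplying `Δ` by its conjugates gives a nonzero integer `N(a, b, c, d)` which is small when `Δ`
  is small, and each value is taken few times, by the divisor bound. This suffices if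
  `β γ ^ 6 ≤ τ α`.
* Cut the line into windows of length comparable to `τ ^ (-4)`. The number of quadruples with `Δ` in
  a given window is bounded by matching `√b + √c` with `√d - √a`, using Cauchy-Schwarz and the
  spacing of square roots. This suffices if `τ α ≤ β γ ^ 6`.
-/

/-! ### Divisors, logarithms and harmonic sums -/

theorem natCast_add_one_le_mul_two_rpow_pow {δ : ℝ} (hδ : 0 < δ) (v : ℕ) :
    (v : ℝ) + 1 ≤ (1 + 1 / (δ * log 2)) * ((2 : ℝ) ^ δ) ^ v := by
  have : 0 < δ * log 2 := mul_pos hδ (log_pos one_lt_two)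
  have hexp : 1 + v * (δ * log 2) ≤ ((2 : ℝ) ^ δ) ^ v := by
    rw [rpow_def_of_pos two_pos, ← exp_nat_mul, mul_comm (log 2)]
    linarith [add_one_le_exp (v * (δ * log 2))]
  calc (v : ℝ) + 1
      ≤ v + 1 + v * (δ * log 2) + 1 / (δ * log 2) := by
        have : 0 ≤ v * (δ * log 2) + 1 / (δ * log 2) := by positivity
        linarith
    _ = (1 + 1 / (δ * log 2)) * (1 + v * (δ * log 2)) := by field_simp; ring
    _ ≤ _ := by gcongr

theorem natCast_rpow_eq_prod_primeFactors {n : ℕ} (hn : n ≠ 0) (δ : ℝ) :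
    (n : ℝ) ^ δ = ∏ p ∈ n.primeFactors, ((p : ℝ) ^ δ) ^ n.factorization p := by
  have hcomm (p : ℕ) : ((p : ℝ) ^ δ) ^ n.factorization p = ((p : ℝ) ^ n.factorization p) ^ δ := by
    rw [← rpow_natCast, ← rpow_natCast, ← rpow_mul p.cast_nonneg, ← rpow_mul p.cast_nonneg,
      mul_comm]
  simp only [hcomm]
  rw [finsetProd_rpow _ _ fun p _ ↦ by positivity]
  congr 1
  exact_mod_cast (Nat.prod_factorization_pow_eq_self hn).symm

/- Primes `p` with `p ^ δ ≥ 2` contribute at most `1` to `d(n) / n ^ δ`; each of the boundedly many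
others contributes a bounded factor. -/
theorem exists_card_divisors_le_mul_rpow {δ : ℝ} (hδ : 0 < δ) :
    ∃ C : ℝ, 1 ≤ C ∧ ∀ n : ℕ, (#n.divisors : ℝ) ≤ C * (n : ℝ) ^ δ := by
  set c : ℝ := 1 + 1 / (δ * log 2)
  have hc1 : 1 ≤ c := by
    have : 0 < log 2 := log_pos one_lt_two
    have : 0 < 1 / (δ * log 2) := by positivity
    linarith
  obtain ⟨P, hP⟩ := exists_nat_ge ((2 : ℝ) ^ (1 / δ))
  refine ⟨c ^ P, one_le_pow₀ hc1, fun n ↦ ?_⟩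
  rcases eq_or_ne n 0 with rfl | hn
  · simp only [Nat.divisors_zero, card_empty, Nat.cast_zero]
    positivity
  have hlocal : ∀ p ∈ n.primeFactors, (n.factorization p : ℝ) + 1 ≤
      (if p < P then c else 1) * ((p : ℝ) ^ δ) ^ n.factorization p := fun p hp ↦ by
    split_ifs with hpP
    · have hp2 : (2 : ℝ) ≤ p := by exact_mod_cast (Nat.prime_of_mem_primeFactors hp).two_le
      exact (natCast_add_one_le_mul_two_rpow_pow hδ _).trans (by gcongr)
    · have h2 : (2 : ℝ) ≤ (p : ℝ) ^ δ := by
        have h2p : (2 : ℝ) ^ (1 / δ) ≤ p := hP.trans (by exact_mod_cast not_lt.mp hpP)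
        calc (2 : ℝ) = ((2 : ℝ) ^ (1 / δ)) ^ δ := by
              rw [← rpow_mul two_pos.le, one_div_mul_cancel hδ.ne', rpow_one]
          _ ≤ _ := by gcongr
      calc (n.factorization p : ℝ) + 1 ≤ 2 ^ n.factorization p := by
            exact_mod_cast Nat.lt_two_pow_self (n := n.factorization p)
        _ ≤ _ := by rw [one_mul]; gcongr
  calc (#n.divisors : ℝ)
      = ∏ p ∈ n.primeFactors, ((n.factorization p : ℝ) + 1) := by
        rw [Nat.card_divisors hn]; push_cast; rfl
    _ ≤ ∏ p ∈ n.primeFactors, (if p < P then c else 1) * ((p : ℝ) ^ δ) ^ n.factorization p :=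
        prod_le_prod (fun _ _ ↦ by positivity) hlocal
    _ = (∏ p ∈ n.primeFactors, if p < P then c else 1) * (n : ℝ) ^ δ := by
        rw [prod_mul_distrib, natCast_rpow_eq_prod_primeFactors hn]
    _ ≤ c ^ P * (n : ℝ) ^ δ := by
        gcongr
        rw [prod_ite, prod_const, prod_const_one, mul_one]
        refine pow_le_pow_right₀ hc1 ((card_le_card fun p hp ↦ ?_).trans_eq (card_range P))
        exact mem_range.mpr (mem_filter.mp hp).2

theorem one_add_log_le_mul_rpow {δ x : ℝ} (hδ : 0 < δ) (hx : 1 ≤ x) :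
    1 + log x ≤ (1 + 1 / δ) * x ^ δ := by
  have hlog : log x ≤ x ^ δ / δ := log_le_rpow_div (by linarith) hδ
  have hone : 1 ≤ x ^ δ := one_le_rpow hx hδ.le
  calc 1 + log x ≤ x ^ δ + x ^ δ / δ := add_le_add hone hlog
    _ = (1 + 1 / δ) * x ^ δ := by ring

theorem sum_Icc_one_div_le_one_add_log (n : ℕ) : ∑ q ∈ Icc 1 n, (1 : ℝ) / q ≤ 1 + log n := by
  simpa [harmonic_eq_sum_Icc] using harmonic_le_one_add_log n

theorem sum_one_div_one_add_abs_le (s : Finset ℤ) {N : ℕ} (hs : ∀ k ∈ s, k.natAbs ≤ N) :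
    ∑ k ∈ s, 1 / (1 + |(k : ℝ)|) ≤ 2 * (1 + log (N + 1)) := by
  have hmap : ∀ k ∈ s, k.natAbs + 1 ∈ Icc 1 (N + 1) := fun k hk ↦ by
    have := hs k hk
    rw [mem_Icc]; omega
  have hfiber (q : ℕ) : ∑ k ∈ s with k.natAbs + 1 = q, 1 / (1 + |(k : ℝ)|) ≤ 2 * ((1 : ℝ) / q) := by
    have hpair : {k ∈ s | k.natAbs + 1 = q} ⊆ {(q : ℤ) - 1, -((q : ℤ) - 1)} := fun k hk ↦ by
      have := (mem_filter.mp hk).2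
      simp only [mem_insert, mem_singleton]; omega
    have hcard : #{k ∈ s | k.natAbs + 1 = q} ≤ 2 := (card_le_card hpair).trans card_le_two
    have hterm : ∀ k ∈ {k ∈ s | k.natAbs + 1 = q}, 1 / (1 + |(k : ℝ)|) = 1 / (q : ℝ) :=
      fun k hk ↦ by
        rw [← (mem_filter.mp hk).2, ← Int.cast_abs, Int.abs_eq_natAbs, Int.cast_natCast,
          Nat.cast_add_one, add_comm]
    rw [sum_congr rfl hterm, sum_const, nsmul_eq_mul]
    gcongr
    exact_mod_cast hcard
  calc ∑ k ∈ s, 1 / (1 + |(k : ℝ)|)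
      = ∑ q ∈ Icc 1 (N + 1), ∑ k ∈ s with k.natAbs + 1 = q, 1 / (1 + |(k : ℝ)|) :=
        (sum_fiberwise_of_maps_to hmap _).symm
    _ ≤ ∑ q ∈ Icc 1 (N + 1), 2 * ((1 : ℝ) / q) := sum_le_sum fun q _ ↦ hfiber q
    _ ≤ 2 * (1 + log (N + 1)) := by
        rw [← mul_sum]
        gcongr
        exact_mod_cast sum_Icc_one_div_le_one_add_log (N + 1)

theorem sum_one_div_one_add_abs_comp_le {ι : Type*} (S : Finset ι) (κ : ι → ℤ) {N : ℕ} {M : ℝ}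
    (hM : 0 ≤ M) (hκ : ∀ n ∈ S, (κ n).natAbs ≤ N)
    (hfiber : ∀ k : ℤ, k.natAbs ≤ N → (#{n ∈ S | κ n = k} : ℝ) ≤ M) :
    ∑ n ∈ S, 1 / (1 + |(κ n : ℝ)|) ≤ M * (2 * (1 + log (N + 1))) := by
  have himage : ∀ k ∈ S.image κ, k.natAbs ≤ N := by simpa only [forall_mem_image] using hκ
  calc ∑ n ∈ S, 1 / (1 + |(κ n : ℝ)|)
      = ∑ k ∈ S.image κ, (#{n ∈ S | κ n = k} : ℝ) * (1 / (1 + |(k : ℝ)|)) := by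
        rw [sum_comp (fun k : ℤ ↦ 1 / (1 + |(k : ℝ)|)) κ]; simp only [nsmul_eq_mul]
    _ ≤ ∑ k ∈ S.image κ, M * (1 / (1 + |(k : ℝ)|)) := by
        gcongr with k hk
        exact hfiber k (himage k hk)
    _ ≤ M * (2 * (1 + log (N + 1))) := by
        rw [← mul_sum]
        exact mul_le_mul_of_nonneg_left (sum_one_div_one_add_abs_le _ himage) hM

/-! ### Counting with Cauchy–Schwarz -/

theorem card_le_add_one_of_sub_le {X : Finset ℕ} {L : ℝ} (hL : 0 ≤ L)
    (hX : ∀ x ∈ X, ∀ y ∈ X, x ≤ y → (y : ℝ) - x ≤ L) : (#X : ℝ) ≤ L + 1 := by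
  rcases X.eq_empty_or_nonempty with rfl | hne
  · simpa using by linarith
  have hle : X.min' hne ≤ X.max' hne := min'_le_max' _ hne
  have hdiam := hX _ (X.min'_mem hne) _ (X.max'_mem hne) hle
  have hsub : X ⊆ Icc (X.min' hne) (X.max' hne) := fun x hx ↦
    mem_Icc.mpr ⟨min'_le _ _ hx, le_max' _ _ hx⟩
  have hcard := card_le_card hsub
  rw [Nat.card_Icc] at hcard
  have : (#X : ℝ) + X.min' hne ≤ X.max' hne + 1 := by exact_mod_cast (by omega)
  linarith

theorem sq_card_le_card_mul_card_fiber_pairs {ι κ : Type*} [DecidableEq κ] {S : Finset ι}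
    {T : Finset κ} {f : ι → κ} (hf : ∀ x ∈ S, f x ∈ T) :
    #S ^ 2 ≤ #T * #{p ∈ S ×ˢ S | f p.1 = f p.2} := by
  have hpairs : #{p ∈ S ×ˢ S | f p.1 = f p.2} = ∑ k ∈ T, #{x ∈ S | f x = k} ^ 2 := by
    rw [card_eq_sum_card_fiberwise (f := fun p ↦ f p.1) (t := T)
      fun p hp ↦ hf _ (mem_product.mp (mem_filter.mp hp).1).1]
    refine sum_congr rfl fun k _ ↦ ?_
    rw [sq, ← card_product]
    congr 1
    ext ⟨x, y⟩
    simp only [mem_filter, mem_product]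
    grind
  rw [hpairs, card_eq_sum_card_fiberwise hf]
  exact sq_sum_le_card_mul_sum_sq

theorem sq_card_le_of_subset_Ico {S : Finset ℕ} {a N Q : ℕ} (hS : S ⊆ Ico a (a + N)) (hQ : 0 < Q) :
    #S ^ 2 ≤ (N / Q + 1) * (#S + 2 * #{p ∈ S ×ˢ S | p.1 < p.2 ∧ p.2 < p.1 + Q}) := by
  set F := {p ∈ S ×ˢ S | p.1 < p.2 ∧ p.2 < p.1 + Q} with hF
  have hblock : ∀ x ∈ S, (x - a) / Q ∈ range (N / Q + 1) := fun x hx ↦ by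
    have := mem_Ico.mp (hS hx)
    exact mem_range.mpr (Nat.lt_succ_of_le (Nat.div_le_div_right (by omega)))
  have hsub : {p ∈ S ×ˢ S | (p.1 - a) / Q = (p.2 - a) / Q} ⊆ S.diag ∪ (F ∪ F.image Prod.swap) := by
    rintro ⟨x, y⟩ hp
    obtain ⟨⟨hx, hy⟩, hxy⟩ : (x ∈ S ∧ y ∈ S) ∧ (x - a) / Q = (y - a) / Q := by
      simpa only [mem_filter, mem_product] using hp
    have hxa := mem_Ico.mp (hS hx)
    have hya := mem_Ico.mp (hS hy)
    have hxdiv := Nat.div_add_mod (x - a) Q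
    have hydiv := Nat.div_add_mod (y - a) Q
    have hxmod := Nat.mod_lt (x - a) hQ
    have hymod := Nat.mod_lt (y - a) hQ
    rw [hxy] at hxdiv
    simp only [hF, mem_union, mem_diag, mem_image, mem_filter, mem_product, Prod.exists,
      Prod.swap_prod_mk, Prod.mk.injEq]
    rcases lt_trichotomy x y with h | h | h
    · exact .inr (.inl ⟨⟨hx, hy⟩, h, by omega⟩)
    · exact .inl ⟨hx, h⟩
    · exact .inr (.inr ⟨y, x, ⟨⟨hy, hx⟩, h, by omega⟩, rfl, rfl⟩)
  have hcard : #{p ∈ S ×ˢ S | (p.1 - a) / Q = (p.2 - a) / Q} ≤ #S + 2 * #F := by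
    have hdiag : #S.diag = #S := diag_card S
    have h₁ := card_union_le S.diag (F ∪ F.image Prod.swap)
    have h₂ := card_union_le F (F.image Prod.swap)
    have h₃ : #(F.image Prod.swap) ≤ #F := card_image_le
    have h₄ := card_le_card hsub
    omega
  calc #S ^ 2 ≤ #(range (N / Q + 1)) * _ := sq_card_le_card_mul_card_fiber_pairs hblock
    _ ≤ (N / Q + 1) * (#S + 2 * #F) := by
        rw [card_range]; exact Nat.mul_le_mul_left _ hcard

/-! ### Gaps between square roots in a dyadic block -/

/-- The dyadic block `[A, 2A)` of natural numbers. -/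
def dyadicBlock (A : ℕ) : Finset ℕ := Ico A (2 * A)

theorem mem_dyadicBlock {A n : ℕ} : n ∈ dyadicBlock A ↔ A ≤ n ∧ n < 2 * A := mem_Ico

theorem sqrt_le_sqrt_of_mem_dyadicBlock {A n : ℕ} (hn : n ∈ dyadicBlock A) : √(A : ℝ) ≤ √n :=
  sqrt_le_sqrt (by exact_mod_cast (mem_dyadicBlock.mp hn).1)

theorem sqrt_le_mul_sqrt_of_mem_dyadicBlock {A n : ℕ} (hn : n ∈ dyadicBlock A) :
    √(n : ℝ) ≤ 3 / 2 * √A := by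
  have hn2 : (n : ℝ) ≤ 2 * A := by exact_mod_cast (mem_dyadicBlock.mp hn).2.le
  have hA : √(A : ℝ) ^ 2 = A := sq_sqrt A.cast_nonneg
  exact sqrt_le_iff.mpr ⟨by positivity, by nlinarith [sq_nonneg √(A : ℝ)]⟩

theorem sub_mul_le_of_abs_sqrt_shift_sub_le {B k x y : ℕ} {D g : ℝ} (hx : x ∈ dyadicBlock B)
    (hxk : x + k ∈ dyadicBlock B) (hy : y ∈ dyadicBlock B) (hyk : y + k ∈ dyadicBlock B)
    (hxg : |√((x + k : ℕ) : ℝ) - √x - g| ≤ D) (hyg : |√((y + k : ℕ) : ℝ) - √y - g| ≤ D)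
    (hxy : x ≤ y) : ((y : ℝ) - x) * k ≤ 54 * D * (B * √B) := by
  have hs : √(B : ℝ) * √B = B := mul_self_sqrt B.cast_nonneg
  have hp : √(x : ℝ) * √x = x := mul_self_sqrt x.cast_nonneg
  have hq : √((x + k : ℕ) : ℝ) * √((x + k : ℕ) : ℝ) = x + k := by
    rw [mul_self_sqrt (Nat.cast_nonneg _)]; push_cast; ring
  have hu : √(y : ℝ) * √y = y := mul_self_sqrt y.cast_nonneg
  have hv : √((y + k : ℕ) : ℝ) * √((y + k : ℕ) : ℝ) = y + k := by
    rw [mul_self_sqrt (Nat.cast_nonneg _)]; push_cast; ring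
  have hpu : √(x : ℝ) ≤ √y := sqrt_le_sqrt (by exact_mod_cast hxy)
  have hqv : √((x + k : ℕ) : ℝ) ≤ √((y + k : ℕ) : ℝ) := sqrt_le_sqrt (by gcongr)
  have hp3 := sqrt_le_mul_sqrt_of_mem_dyadicBlock hx
  have hq3 := sqrt_le_mul_sqrt_of_mem_dyadicBlock hxk
  have hu3 := sqrt_le_mul_sqrt_of_mem_dyadicBlock hy
  have hv3 := sqrt_le_mul_sqrt_of_mem_dyadicBlock hyk
  set s := √(B : ℝ)
  set p := √(x : ℝ)
  set q := √((x + k : ℕ) : ℝ)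
  set u := √(y : ℝ)
  set v := √((y + k : ℕ) : ℝ)
  have : 0 ≤ s := sqrt_nonneg _
  have : 0 ≤ p := sqrt_nonneg _
  have : 0 ≤ q := sqrt_nonneg _
  have hD0 : 0 ≤ D := (abs_nonneg _).trans hxg
  have hgap : (q - p) - (v - u) ≤ 2 * D := by linarith [(abs_le.mp hxg).2, (abs_le.mp hyg).1]
  calc ((y : ℝ) - x) * k = (u - p) * (u + p) * k := by linear_combination k * (hp - hu)
    _ ≤ (u - p) * (3 * s) * k := by
        gcongr
        linarith
    _ ≤ ((v - q) + (u - p)) * (3 * s) * k := by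
        gcongr
        linarith
    _ = ((q - p) - (v - u)) * ((q + p) * (v + u)) * (3 * s) := by
        linear_combination (3 * s) * ((q + p) * (hv - hu) - (v + u) * (hq - hp))
    _ ≤ 2 * D * ((3 * s) * (3 * s)) * (3 * s) := by
        gcongr <;> linarith
    _ = 54 * D * (B * s) := by linear_combination 54 * D * s * hs

theorem card_sqrt_shift_window_le {B k : ℕ} (hk : 0 < k) {D : ℝ} (hD : 0 ≤ D) (g : ℝ) :
    (#{b ∈ dyadicBlock B | b + k ∈ dyadicBlock B ∧ |√((b + k : ℕ) : ℝ) - √b - g| ≤ D} : ℝ) ≤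
      54 * D * (B * √B) / k + 1 := by
  refine card_le_add_one_of_sub_le (by positivity) fun x hx y hy hxy ↦ ?_
  obtain ⟨hxB, hxk, hxg⟩ := mem_filter.mp hx
  obtain ⟨hyB, hyk, hyg⟩ := mem_filter.mp hy
  rw [le_div_iff₀ (by exact_mod_cast hk)]
  exact sub_mul_le_of_abs_sqrt_shift_sub_le hxB hxk hyB hyk hxg hyg hxy

theorem sub_bounds_of_abs_sqrt_sub_sub_le {B : ℕ} {p : ℕ × ℕ} {D g : ℝ} (hD : 0 < D)
    (hg : 2 * D ≤ g) (hp₁ : p.1 ∈ dyadicBlock B) (hp₂ : p.2 ∈ dyadicBlock B)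
    (hp : |√(p.2 : ℝ) - √p.1 - g| ≤ D) :
    p.1 < p.2 ∧ g * √B ≤ ((p.2 - p.1 : ℕ) : ℝ) ∧
      ((p.2 - p.1 : ℕ) : ℝ) ≤ 9 / 2 * g * √B := by
  obtain ⟨hlo, hhi⟩ := abs_le.mp hp
  have : (0 : ℝ) ≤ √B := sqrt_nonneg _
  have h1lo := sqrt_le_sqrt_of_mem_dyadicBlock hp₁
  have := sqrt_le_sqrt_of_mem_dyadicBlock hp₂
  have := sqrt_le_mul_sqrt_of_mem_dyadicBlock hp₁
  have h2hi := sqrt_le_mul_sqrt_of_mem_dyadicBlock hp₂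
  have hlt : p.1 < p.2 := by
    have : √(p.1 : ℝ) < √p.2 := by linarith
    exact_mod_cast (sqrt_lt_sqrt_iff p.1.cast_nonneg).mp this
  have hdiff : ((p.2 - p.1 : ℕ) : ℝ) = (√p.2 - √p.1) * (√p.2 + √p.1) := by
    rw [Nat.cast_sub hlt.le]
    linear_combination mul_self_sqrt (p.1.cast_nonneg (α := ℝ)) - mul_self_sqrt p.2.cast_nonneg
  refine ⟨hlt, ?_, ?_⟩
  · calc g * √B = g / 2 * (2 * √B) := by ring
      _ ≤ (√p.2 - √p.1) * (√p.2 + √p.1) := by gcongr <;> linarith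
      _ = _ := hdiff.symm
  · calc ((p.2 - p.1 : ℕ) : ℝ) = (√p.2 - √p.1) * (√p.2 + √p.1) := hdiff
      _ ≤ (3 / 2 * g) * (3 * √B) := by gcongr <;> linarith
      _ = 9 / 2 * g * √B := by ring

theorem card_sqrt_gap_window_fiber_le {B : ℕ} {D g : ℝ} (hD : 0 < D) (hg : 2 * D ≤ g)
    {p₀ : ℕ × ℕ} (hp₀ : p₀ ∈ dyadicBlock B ×ˢ dyadicBlock B)
    (hpg₀ : |√(p₀.2 : ℝ) - √p₀.1 - g| ≤ D) :
    (#{p ∈ dyadicBlock B ×ˢ dyadicBlock B |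
        |√(p.2 : ℝ) - √p.1 - g| ≤ D ∧ p.2 - p.1 = p₀.2 - p₀.1} : ℝ) ≤
      54 * D * (B * √B) / ((p₀.2 - p₀.1 : ℕ) : ℝ) + 1 := by
  rw [mem_product] at hp₀
  have hlt₀ := (sub_bounds_of_abs_sqrt_sub_sub_le hD hg hp₀.1 hp₀.2 hpg₀).1
  set k := p₀.2 - p₀.1
  set X := {p ∈ dyadicBlock B ×ˢ dyadicBlock B | |√(p.2 : ℝ) - √p.1 - g| ≤ D ∧ p.2 - p.1 = k}
    with hX
  have hmem : ∀ p ∈ X, p.1 ∈ dyadicBlock B ∧ p.2 ∈ dyadicBlock B ∧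
      |√(p.2 : ℝ) - √p.1 - g| ≤ D ∧ p.1 + k = p.2 := by
    intro p hp
    simp only [hX, mem_filter, mem_product] at hp
    obtain ⟨⟨h₁, h₂⟩, hpg, hpk⟩ := hp
    have hlt := (sub_bounds_of_abs_sqrt_sub_sub_le hD hg h₁ h₂ hpg).1
    exact ⟨h₁, h₂, hpg, by omega⟩
  have hinj : Set.InjOn Prod.fst (SetLike.coe X) := fun p hp p' hp' hpp' ↦
    Prod.ext hpp' (by rw [← (hmem p hp).2.2.2, ← (hmem p' hp').2.2.2, hpp'])
  have hshift : X.image Prod.fst ⊆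
      {b ∈ dyadicBlock B | b + k ∈ dyadicBlock B ∧ |√((b + k : ℕ) : ℝ) - √b - g| ≤ D} := by
    simp only [image_subset_iff, mem_filter]
    intro p hp
    obtain ⟨h₁, h₂, hpg, hpk⟩ := hmem p hp
    rw [hpk]
    exact ⟨h₁, h₂, hpg⟩
  calc (#X : ℝ)
      ≤ #{b ∈ dyadicBlock B | b + k ∈ dyadicBlock B ∧ |√((b + k : ℕ) : ℝ) - √b - g| ≤ D} := by
        rw [← card_image_of_injOn hinj]; exact_mod_cast card_le_card hshift
    _ ≤ 54 * D * (B * √B) / k + 1 := card_sqrt_shift_window_le (by omega) hD.le g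

theorem card_sqrt_gap_window_le {B : ℕ} (hB : 0 < B) {D g : ℝ} (hD : 0 < D) (hg : 2 * D ≤ g) :
    (#{p ∈ dyadicBlock B ×ˢ dyadicBlock B | |√(p.2 : ℝ) - √p.1 - g| ≤ D} : ℝ) ≤
      9 / 2 * g * √B + 243 * D * (B * √B) := by
  set X := {p ∈ dyadicBlock B ×ˢ dyadicBlock B | |√(p.2 : ℝ) - √p.1 - g| ≤ D} with hX
  have hg0 : 0 < g := by linarith
  have hmem : ∀ p ∈ X, (p.1 ∈ dyadicBlock B ∧ p.2 ∈ dyadicBlock B) ∧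
      |√(p.2 : ℝ) - √p.1 - g| ≤ D := fun p hp ↦ by simpa only [hX, mem_filter, mem_product] using hp
  have hdiff := fun p hp ↦
    sub_bounds_of_abs_sqrt_sub_sub_le hD hg (hmem p hp).1.1 (hmem p hp).1.2 (hmem p hp).2
  have hfiber : ∀ k ∈ X.image fun p ↦ p.2 - p.1,
      (#{p ∈ X | p.2 - p.1 = k} : ℝ) ≤ 54 * D * (B * √B) / (g * √B) + 1 := by
    rw [forall_mem_image]
    intro p₀ hp₀
    have hlo₀ := (hdiff p₀ hp₀).2.1
    rw [hX, filter_filter]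
    refine (card_sqrt_gap_window_fiber_le hD hg (mem_product.mpr (hmem p₀ hp₀).1)
      (hmem p₀ hp₀).2).trans ?_
    gcongr
  have hcard : (#(X.image fun p ↦ p.2 - p.1) : ℝ) ≤ 9 / 2 * g * √B := by
    have hsub : (X.image fun p ↦ p.2 - p.1) ⊆ Ioc 0 ⌊9 / 2 * g * √B⌋₊ :=
      image_subset_iff.mpr fun p hp ↦
        mem_Ioc.mpr ⟨Nat.sub_pos_of_lt (hdiff p hp).1, Nat.le_floor (hdiff p hp).2.2⟩
    have := card_le_card hsub
    rw [Nat.card_Ioc] at this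
    exact (Nat.cast_le.mpr this).trans (Nat.floor_le (by positivity))
  calc (#X : ℝ) = ∑ k ∈ X.image fun p ↦ p.2 - p.1, (#{p ∈ X | p.2 - p.1 = k} : ℝ) := by
        exact_mod_cast card_eq_sum_card_image _ X
    _ ≤ #(X.image fun p ↦ p.2 - p.1) * (54 * D * (B * √B) / (g * √B) + 1) := by
        rw [← nsmul_eq_mul]; exact sum_le_card_nsmul _ _ _ hfiber
    _ ≤ 9 / 2 * g * √B * (54 * D * (B * √B) / (g * √B) + 1) := by gcongr
    _ = 9 / 2 * g * √B + 243 * D * (B * √B) := by field_simp; ring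

theorem card_sqrt_gap_window_le_of_abs {B : ℕ} (hB : 0 < B) {D g : ℝ} (hD : 0 < D)
    (hg : 2 * D ≤ |g|) :
    (#{p ∈ dyadicBlock B ×ˢ dyadicBlock B | |√(p.2 : ℝ) - √p.1 - g| ≤ D} : ℝ) ≤
      9 / 2 * |g| * √B + 243 * D * (B * √B) := by
  rcases abs_cases g with ⟨hg', -⟩ | ⟨hg', -⟩ <;> rw [hg'] at hg ⊢
  · exact card_sqrt_gap_window_le hB hD hg
  · have hswap : #{p ∈ dyadicBlock B ×ˢ dyadicBlock B | |√(p.2 : ℝ) - √p.1 - g| ≤ D} =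
        #{p ∈ dyadicBlock B ×ˢ dyadicBlock B | |√(p.2 : ℝ) - √p.1 - -g| ≤ D} := by
      refine card_equiv (Equiv.prodComm ℕ ℕ) fun p ↦ ?_
      simp only [mem_filter, mem_product, Equiv.prodComm_apply, Prod.fst_swap, Prod.snd_swap]
      rw [and_comm (a := p.1 ∈ _), ← abs_neg]
      ring_nf
    rw [hswap]
    exact card_sqrt_gap_window_le hB hD hg

theorem sqrt_gap_bounds {A a h : ℕ} (ha : a ∈ dyadicBlock A) (hah : a + h ∈ dyadicBlock A) :
    (h : ℝ) ≤ (√((a + h : ℕ) : ℝ) - √a) * (3 * √A) ∧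
      (√((a + h : ℕ) : ℝ) - √a) * (2 * √A) ≤ h := by
  have hle : √(a : ℝ) ≤ √((a + h : ℕ) : ℝ) := sqrt_le_sqrt (by gcongr; omega)
  have hfactor : (√((a + h : ℕ) : ℝ) - √a) * (√((a + h : ℕ) : ℝ) + √a) = h := by
    have hsq := mul_self_sqrt ((a + h).cast_nonneg (α := ℝ))
    push_cast at hsq ⊢
    linear_combination hsq - mul_self_sqrt (a.cast_nonneg (α := ℝ))
  constructor
  · refine hfactor.symm.le.trans (mul_le_mul_of_nonneg_left ?_ (sub_nonneg.mpr hle))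
    linarith [sqrt_le_mul_sqrt_of_mem_dyadicBlock ha, sqrt_le_mul_sqrt_of_mem_dyadicBlock hah]
  · refine (mul_le_mul_of_nonneg_left ?_ (sub_nonneg.mpr hle)).trans hfactor.le
    linarith [sqrt_le_sqrt_of_mem_dyadicBlock ha, sqrt_le_sqrt_of_mem_dyadicBlock hah]

/-! ### Windows of `√b + s √a` -/

/-- The index `w` of the window `[w D, (w + 1) D)` that contains `√b + s √a`, for `x = (a, b)`. -/
def sqrtWindow (s D : ℝ) (x : ℕ × ℕ) : ℤ := ⌊(√x.2 + s * √x.1) / D⌋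

/-- The number of pairs in `[A, 2A) × [B, 2B)` whose value `√b + s √a` lies in the window `w`. -/
def windowCount (A B : ℕ) (s D : ℝ) (w : ℤ) : ℕ :=
  #{x ∈ dyadicBlock A ×ˢ dyadicBlock B | sqrtWindow s D x = w}

/-- The ordered pairs of points of `[A, 2A) × [B, 2B)` that share a window and whose first
coordinates `a < a'` satisfy `a' - a < Q`. -/
def closeWindowPairs (A B : ℕ) (s D : ℝ) (Q : ℕ) : Finset ((ℕ × ℕ) × (ℕ × ℕ)) :=
  {p ∈ (dyadicBlock A ×ˢ dyadicBlock B) ×ˢ (dyadicBlock A ×ˢ dyadicBlock B) |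
    sqrtWindow s D p.1 = sqrtWindow s D p.2 ∧ p.1.1 < p.2.1 ∧ p.2.1 < p.1.1 + Q}

/-- The bound for the contribution of the windows with at least `R` points to the second moment of
`windowCount A B s D`. -/
def richWindowBound (A B : ℕ) (D R : ℝ) : ℝ :=
  54 * (A ^ 3 * (√B / √A)) / R + 2916 * D * A ^ 2 * (B * √B)

theorem card_dyadicBlock (A : ℕ) : #(dyadicBlock A) = A := by
  rw [dyadicBlock, Nat.card_Ico]; omega

theorem sum_windowCount_le (A B : ℕ) (s D : ℝ) (V : Finset ℤ) :
    ∑ w ∈ V, (windowCount A B s D w : ℝ) ≤ A * B := by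
  have h : ∑ w ∈ V, windowCount A B s D w ≤ A * B := by
    simp only [windowCount]
    rw [sum_card_fiberwise_eq_card_filter]
    exact (card_filter_le _ _).trans_eq (by simp only [card_product, card_dyadicBlock])
  exact_mod_cast h

theorem abs_sub_le_of_sqrtWindow_eq {s D : ℝ} (hD : 0 < D) {x y : ℕ × ℕ}
    (h : sqrtWindow s D x = sqrtWindow s D y) :
    |(√x.2 + s * √x.1) - (√y.2 + s * √y.1)| ≤ D := by
  have := Int.abs_sub_lt_one_of_floor_eq_floor h
  rw [← sub_div, abs_div, abs_of_pos hD, div_lt_one hD] at this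
  exact this.le

theorem eq_of_sqrtWindow_eq_of_le {B : ℕ} {s D : ℝ} (hD : 0 < D) (hDB : 8 * D * √B ≤ 1)
    {x y : ℕ × ℕ} (hx : x.2 ∈ dyadicBlock B) (hy : y.2 ∈ dyadicBlock B) (hxy : x.1 = y.1)
    (hle : x.2 ≤ y.2) (h : sqrtWindow s D x = sqrtWindow s D y) : x = y := by
  have hclose := abs_sub_le_of_sqrtWindow_eq hD h
  obtain ⟨k, hk⟩ := Nat.exists_eq_add_of_le hle
  rw [hk] at hy
  have hgap := (sqrt_gap_bounds hx hy).1
  rw [← hk] at hgap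
  have hdiff : √(y.2 : ℝ) - √x.2 ≤ D := by
    rw [hxy] at hclose
    linarith [(abs_le.mp hclose).1]
  have hk1 : (k : ℝ) < 1 := by
    calc (k : ℝ) ≤ D * (3 * √B) := hgap.trans (by gcongr)
      _ < 1 := by linarith [mul_nonneg hD.le (sqrt_nonneg (B : ℝ))]
  have hk0 : k = 0 := Nat.lt_one_iff.mp (by exact_mod_cast hk1)
  exact Prod.ext hxy (by omega)

theorem injOn_fst_filter_sqrtWindow_eq {A B : ℕ} {s D : ℝ} (hD : 0 < D) (hDB : 8 * D * √B ≤ 1)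
    (w : ℤ) :
    Set.InjOn Prod.fst
      (SetLike.coe {x ∈ dyadicBlock A ×ˢ dyadicBlock B | sqrtWindow s D x = w}) := by
  intro x hx y hy hxy
  obtain ⟨hx, hxw⟩ := mem_filter.mp hx
  obtain ⟨hy, hyw⟩ := mem_filter.mp hy
  have hxB := (mem_product.mp hx).2
  have hyB := (mem_product.mp hy).2
  rcases le_total x.2 y.2 with hle | hle
  · exact eq_of_sqrtWindow_eq_of_le hD hDB hxB hyB hxy hle (hxw.trans hyw.symm)
  · exact (eq_of_sqrtWindow_eq_of_le hD hDB hyB hxB hxy.symm hle (hyw.trans hxw.symm)).symm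

theorem card_same_window_le {A B a h : ℕ} (hA : 0 < A) (hB : 0 < B) (hh : 0 < h) {s D : ℝ}
    (hs : |s| = 1) (hD : 0 < D) (hDA : 8 * D * √A ≤ 1) (ha : a ∈ dyadicBlock A)
    (hah : a + h ∈ dyadicBlock A) :
    (#{b ∈ dyadicBlock B ×ˢ dyadicBlock B |
        sqrtWindow s D (a, b.1) = sqrtWindow s D (a + h, b.2)} : ℝ) ≤
      9 / 4 * h * (√B / √A) + 243 * D * (B * √B) := by
  set g := √((a + h : ℕ) : ℝ) - √a with hg
  have hsA : 0 < √(A : ℝ) := by positivity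
  obtain ⟨hlo, hhi⟩ := sqrt_gap_bounds ha hah
  rw [← hg] at hlo hhi
  have hh1 : (1 : ℝ) ≤ h := by exact_mod_cast hh
  have hDg : 2 * D ≤ g := by
    by_contra! hlt
    nlinarith
  have hg0 : 0 < g := by linarith
  have habs : |-(s * g)| = g := by rw [abs_neg, abs_mul, hs, one_mul, abs_of_pos hg0]
  have hsub : {b ∈ dyadicBlock B ×ˢ dyadicBlock B |
      sqrtWindow s D (a, b.1) = sqrtWindow s D (a + h, b.2)} ⊆
      {b ∈ dyadicBlock B ×ˢ dyadicBlock B | |√(b.2 : ℝ) - √b.1 - -(s * g)| ≤ D} := by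
    refine monotone_filter_right _ fun b _ hb ↦ ?_
    have := abs_sub_le_of_sqrtWindow_eq hD hb
    rw [abs_sub_comm] at this
    convert this using 2
    rw [hg]; ring
  have hgh : g ≤ h / (2 * √A) := (le_div_iff₀ (by positivity)).mpr hhi
  calc _ ≤ _ := Nat.cast_le.mpr (card_le_card hsub)
    _ ≤ 9 / 2 * |-(s * g)| * √B + 243 * D * (B * √B) :=
        card_sqrt_gap_window_le_of_abs hB hD (by rwa [habs])
    _ ≤ 9 / 2 * (h / (2 * √A)) * √B + 243 * D * (B * √B) := by rw [habs]; gcongr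
    _ = 9 / 4 * h * (√B / √A) + 243 * D * (B * √B) := by ring

theorem mem_closeWindowPairs {A B Q : ℕ} {s D : ℝ} {p : (ℕ × ℕ) × (ℕ × ℕ)} :
    p ∈ closeWindowPairs A B s D Q ↔ ((p.1.1 ∈ dyadicBlock A ∧ p.1.2 ∈ dyadicBlock B) ∧
      p.2.1 ∈ dyadicBlock A ∧ p.2.2 ∈ dyadicBlock B) ∧
      sqrtWindow s D p.1 = sqrtWindow s D p.2 ∧ p.1.1 < p.2.1 ∧ p.2.1 < p.1.1 + Q := by
  simp only [closeWindowPairs, mem_filter, mem_product]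

theorem card_closeWindowPairs_fst_eq_le {A B Q : ℕ} (hA : 0 < A) (hB : 0 < B) {s D : ℝ}
    (hs : |s| = 1) (hD : 0 < D) (hDA : 8 * D * √A ≤ 1) (a : ℕ) {h : ℕ} (hh : 0 < h) :
    (#{p ∈ closeWindowPairs A B s D Q | p.1.1 = a ∧ p.2.1 = a + h} : ℝ) ≤
      9 / 4 * h * (√B / √A) + 243 * D * (B * √B) := by
  by_cases hblock : a ∈ dyadicBlock A ∧ a + h ∈ dyadicBlock A
  · refine (Nat.cast_le.mpr ?_).trans (card_same_window_le hA hB hh hs hD hDA hblock.1 hblock.2)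
    refine card_le_card_of_injOn (fun p ↦ (p.1.2, p.2.2)) (fun p hp ↦ ?_) fun p hp p' hp' hpp' ↦ ?_
    · obtain ⟨hp, hpa, hpah⟩ := mem_filter.mp hp
      obtain ⟨⟨⟨-, hb⟩, -, hb'⟩, hw, -⟩ := mem_closeWindowPairs.mp hp
      exact mem_filter.mpr ⟨mem_product.mpr ⟨hb, hb'⟩, by rw [← hpah, ← hpa]; exact hw⟩
    · obtain ⟨-, hpa, hpah⟩ := mem_filter.mp hp
      obtain ⟨-, hpa', hpah'⟩ := mem_filter.mp hp'
      obtain ⟨hb, hb'⟩ := Prod.mk.inj hpp'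
      exact Prod.ext (Prod.ext (hpa.trans hpa'.symm) hb) (Prod.ext (hpah.trans hpah'.symm) hb')
  · have hempty : {p ∈ closeWindowPairs A B s D Q | p.1.1 = a ∧ p.2.1 = a + h} = ∅ := by
      refine filter_eq_empty_iff.mpr fun p hp ⟨hpa, hpah⟩ ↦ hblock ?_
      rw [← hpah, ← hpa]
      exact ⟨(mem_closeWindowPairs.mp hp).1.1.1, (mem_closeWindowPairs.mp hp).1.2.1⟩
    rw [hempty, card_empty, Nat.cast_zero]
    positivity

theorem card_closeWindowPairs_le {A B Q : ℕ} (hA : 0 < A) (hB : 0 < B) {s D H : ℝ}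
    (hs : |s| = 1) (hD : 0 < D) (hDA : 8 * D * √A ≤ 1) (hQ : 0 < Q) (hH : (Q : ℝ) - 1 ≤ H) :
    (#(closeWindowPairs A B s D Q) : ℝ) ≤
      A * H * (9 / 4 * H * (√B / √A) + 243 * D * (B * √B)) := by
  have hQ1 : (1 : ℝ) ≤ Q := by exact_mod_cast hQ
  have hH0 : 0 ≤ H := by linarith
  set φ : (ℕ × ℕ) × (ℕ × ℕ) → ℕ × ℕ := fun p ↦ (p.1.1, p.2.1 - p.1.1)
  have hmaps : ∀ p ∈ closeWindowPairs A B s D Q, φ p ∈ dyadicBlock A ×ˢ Ico 1 Q := fun p hp ↦ by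
    obtain ⟨⟨⟨ha, -⟩, -⟩, -, hlt, hltQ⟩ := mem_closeWindowPairs.mp hp
    exact mem_product.mpr ⟨ha, mem_Ico.mpr ⟨by dsimp only [φ]; omega, by dsimp only [φ]; omega⟩⟩
  have hfiber : ∀ i ∈ dyadicBlock A ×ˢ Ico 1 Q,
      (#{p ∈ closeWindowPairs A B s D Q | φ p = i} : ℝ) ≤
        9 / 4 * H * (√B / √A) + 243 * D * (B * √B) := by
    rintro ⟨a, h⟩ hi
    obtain ⟨hh, hhQ⟩ : 1 ≤ h ∧ h < Q := mem_Ico.mp (mem_product.mp hi).2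
    have hhH : (h : ℝ) ≤ H := by
      have : (h : ℝ) + 1 ≤ Q := by exact_mod_cast hhQ
      linarith
    have hsub : {p ∈ closeWindowPairs A B s D Q | φ p = (a, h)} ⊆
        {p ∈ closeWindowPairs A B s D Q | p.1.1 = a ∧ p.2.1 = a + h} := fun p hp ↦ by
      obtain ⟨hp, hpφ⟩ := mem_filter.mp hp
      obtain ⟨hpa, hph⟩ := Prod.mk.inj hpφ
      have := (mem_closeWindowPairs.mp hp).2.2.1
      exact mem_filter.mpr ⟨hp, hpa, by omega⟩
    refine (Nat.cast_le.mpr (card_le_card hsub)).trans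
      ((card_closeWindowPairs_fst_eq_le hA hB hs hD hDA a hh).trans ?_)
    gcongr
  calc (#(closeWindowPairs A B s D Q) : ℝ)
      = ∑ i ∈ dyadicBlock A ×ˢ Ico 1 Q, (#{p ∈ closeWindowPairs A B s D Q | φ p = i} : ℝ) := by
        exact_mod_cast card_eq_sum_card_fiberwise hmaps
    _ ≤ #(dyadicBlock A ×ˢ Ico 1 Q) * (9 / 4 * H * (√B / √A) + 243 * D * (B * √B)) := by
        rw [← nsmul_eq_mul]; exact sum_le_card_nsmul _ _ _ hfiber
    _ ≤ A * H * (9 / 4 * H * (√B / √A) + 243 * D * (B * √B)) := by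
        rw [card_product, card_dyadicBlock, Nat.card_Ico]
        push_cast [Nat.cast_sub hQ]
        gcongr

theorem sq_windowCount_le {A B Q : ℕ} {s D R : ℝ} (hD : 0 < D) (hDB : 8 * D * √B ≤ 1)
    (hR : 4 ≤ R) (hQ : 0 < Q) (hQR : 2 * (A : ℝ) ≤ Q * R) {w : ℤ} (hw : R ≤ windowCount A B s D w) :
    (windowCount A B s D w : ℝ) ^ 2 ≤
      6 * R * #{p ∈ closeWindowPairs A B s D Q | sqrtWindow s D p.1 = w} := by
  set X := {x ∈ dyadicBlock A ×ˢ dyadicBlock B | sqrtWindow s D x = w} with hX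
  set S := X.image Prod.fst with hS
  have hcard : #S = windowCount A B s D w :=
    card_image_of_injOn (injOn_fst_filter_sqrtWindow_eq hD hDB w)
  have hSA : S ⊆ Ico A (A + A) := image_subset_iff.mpr fun x hx ↦ by
    rw [← two_mul]; exact (mem_product.mp (mem_filter.mp hx).1).1
  have hclose : #{p ∈ S ×ˢ S | p.1 < p.2 ∧ p.2 < p.1 + Q} ≤
      #{p ∈ closeWindowPairs A B s D Q | sqrtWindow s D p.1 = w} := by
    refine (card_le_card fun p hp ↦ ?_).trans
      (card_image_le (f := fun p : (ℕ × ℕ) × (ℕ × ℕ) ↦ (p.1.1, p.2.1)))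
    obtain ⟨⟨⟨x, hx, hxp⟩, y, hy, hyp⟩, hlt, hltQ⟩ :
        ((∃ x ∈ X, x.1 = p.1) ∧ ∃ y ∈ X, y.1 = p.2) ∧ p.1 < p.2 ∧ p.2 < p.1 + Q := by
      simpa only [hS, mem_filter, mem_product, mem_image] using hp
    obtain ⟨hxP, hxw⟩ := mem_filter.mp hx
    obtain ⟨hyP, hyw⟩ := mem_filter.mp hy
    rw [← hxp, ← hyp] at hlt hltQ
    refine mem_image.mpr ⟨(x, y), mem_filter.mpr ⟨?_, hxw⟩, Prod.ext hxp hyp⟩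
    exact mem_filter.mpr ⟨mem_product.mpr ⟨hxP, hyP⟩, hxw.trans hyw.symm, hlt, hltQ⟩
  have hblocks : ((A / Q : ℕ) : ℝ) + 1 ≤ 3 * R / 4 := by
    have hdiv : (A : ℝ) / Q ≤ R / 2 := by
      rw [div_le_div_iff₀ (by exact_mod_cast hQ) two_pos]; linarith
    linarith [Nat.cast_div_le (α := ℝ) (m := A) (n := Q)]
  have hCS : (windowCount A B s D w : ℝ) ^ 2 ≤ ((A / Q : ℕ) + 1) * (windowCount A B s D w +
      2 * #{p ∈ S ×ˢ S | p.1 < p.2 ∧ p.2 < p.1 + Q}) := by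
    have := sq_card_le_of_subset_Ico hSA hQ
    rw [hcard] at this
    exact_mod_cast this
  have hclose' : (#{p ∈ S ×ˢ S | p.1 < p.2 ∧ p.2 < p.1 + Q} : ℝ) ≤
      #{p ∈ closeWindowPairs A B s D Q | sqrtWindow s D p.1 = w} := by exact_mod_cast hclose
  have hmain : (windowCount A B s D w : ℝ) ^ 2 ≤ 3 * R / 4 * (windowCount A B s D w +
      2 * #{p ∈ closeWindowPairs A B s D Q | sqrtWindow s D p.1 = w}) :=
    hCS.trans (by gcongr)
  nlinarith [mul_le_mul_of_nonneg_right hw (Nat.cast_nonneg (α := ℝ) (windowCount A B s D w))]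

theorem sum_sq_windowCount_le_of_le_windowCount {A B : ℕ} (hA : 0 < A) (hB : 0 < B) {s D R : ℝ}
    (hs : |s| = 1) (hD : 0 < D) (hDA : 8 * D * √A ≤ 1) (hDB : 8 * D * √B ≤ 1) (hR : 4 ≤ R)
    {V : Finset ℤ} (hV : ∀ w ∈ V, R ≤ windowCount A B s D w) :
    ∑ w ∈ V, (windowCount A B s D w : ℝ) ^ 2 ≤ richWindowBound A B D R := by
  have : (0 : ℝ) < A := by exact_mod_cast hA
  have hR0 : 0 < R := by linarith
  set Q := ⌈2 * (A : ℝ) / R⌉₊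
  have hQ : 0 < Q := Nat.ceil_pos.mpr (by positivity)
  have hQR : 2 * (A : ℝ) ≤ Q * R := (div_le_iff₀ hR0).mp (Nat.le_ceil _)
  have hQ1 : (Q : ℝ) - 1 ≤ 2 * (A : ℝ) / R := by
    linarith [Nat.ceil_lt_add_one (show 0 ≤ 2 * (A : ℝ) / R by positivity)]
  have hfibers : ∑ w ∈ V, (#{p ∈ closeWindowPairs A B s D Q | sqrtWindow s D p.1 = w} : ℝ) ≤
      #(closeWindowPairs A B s D Q) := by
    rw [← Nat.cast_sum, sum_card_fiberwise_eq_card_filter]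
    exact_mod_cast card_filter_le _ _
  calc ∑ w ∈ V, (windowCount A B s D w : ℝ) ^ 2
      ≤ ∑ w ∈ V, 6 * R * #{p ∈ closeWindowPairs A B s D Q | sqrtWindow s D p.1 = w} :=
        sum_le_sum fun w hw ↦ sq_windowCount_le hD hDB hR hQ hQR (hV w hw)
    _ ≤ 6 * R * #(closeWindowPairs A B s D Q) := by rw [← mul_sum]; gcongr
    _ ≤ 6 * R * (A * (2 * A / R) * (9 / 4 * (2 * A / R) * (√B / √A) + 243 * D * (B * √B))) := by
        gcongr
        exact card_closeWindowPairs_le hA hB hs hD hDA hQ hQ1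
    _ = richWindowBound A B D R := by rw [richWindowBound]; field_simp; ring

theorem sum_mul_le_of_forall_le {ι : Type*} {V W : Finset ι} {f g : ι → ℝ} {R : ℝ} (hR : 0 ≤ R)
    (hVW : V ⊆ W) (hf : ∀ w, 0 ≤ f w) (hg : ∀ w ∈ V, g w ≤ R) :
    ∑ w ∈ V, f w * g w ≤ R * ∑ w ∈ W, f w :=
  calc ∑ w ∈ V, f w * g w ≤ ∑ w ∈ V, R * f w := sum_le_sum fun w hw ↦ by
        rw [mul_comm R]; exact mul_le_mul_of_nonneg_left (hg w hw) (hf w)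
    _ ≤ R * ∑ w ∈ W, f w := by
        rw [← mul_sum]
        exact mul_le_mul_of_nonneg_left (sum_le_sum_of_subset_of_nonneg hVW fun w _ _ ↦ hf w) hR

theorem sum_sq_windowCount_le {A B : ℕ} (hA : 0 < A) (hB : 0 < B) {s D R : ℝ}
    (hs : |s| = 1) (hD : 0 < D) (hDA : 8 * D * √A ≤ 1) (hDB : 8 * D * √B ≤ 1) (hR : 4 ≤ R)
    (V : Finset ℤ) :
    ∑ w ∈ V, (windowCount A B s D w : ℝ) ^ 2 ≤ R * (A * B) + richWindowBound A B D R := by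
  have hR0 : 0 ≤ R := by linarith
  rw [← sum_filter_add_sum_filter_not V (fun w ↦ R ≤ windowCount A B s D w), add_comm]
  refine add_le_add ?_ (sum_sq_windowCount_le_of_le_windowCount hA hB hs hD hDA hDB hR
    fun w hw ↦ (mem_filter.mp hw).2)
  simp only [sq]
  refine (sum_mul_le_of_forall_le hR0 (filter_subset _ _) (fun _ ↦ Nat.cast_nonneg _)
    fun w hw ↦ (not_le.mp (mem_filter.mp hw).2).le).trans ?_
  gcongr
  exact sum_windowCount_le A B s D V

theorem card_sqrtWindow_sub_eq (A₁ A₂ A₃ A₄ : ℕ) (D : ℝ) (k : ℤ) :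
    #{p ∈ (dyadicBlock A₁ ×ˢ dyadicBlock A₄) ×ˢ (dyadicBlock A₂ ×ˢ dyadicBlock A₃) |
        sqrtWindow 1 D p.2 - sqrtWindow (-1) D p.1 = k} =
      ∑ w ∈ (dyadicBlock A₁ ×ˢ dyadicBlock A₄).image (sqrtWindow (-1) D),
        windowCount A₁ A₄ (-1) D w * windowCount A₂ A₃ 1 D (w + k) := by
  rw [card_eq_sum_card_fiberwise (f := fun p ↦ sqrtWindow (-1) D p.1)
    fun p hp ↦ mem_image_of_mem _ (mem_product.mp (mem_filter.mp hp).1).1]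
  refine sum_congr rfl fun w _ ↦ ?_
  rw [windowCount, windowCount, ← card_product]
  congr 1
  ext p
  simp only [mem_filter, mem_product]
  constructor
  · rintro ⟨⟨⟨h₁, h₂⟩, hk⟩, hw⟩
    exact ⟨⟨h₁, hw⟩, h₂, by omega⟩
  · rintro ⟨⟨h₁, hw⟩, h₂, hk⟩
    exact ⟨⟨⟨h₁, h₂⟩, by omega⟩, hw⟩

theorem card_sqrtWindow_sub_eq_le {A₁ A₂ A₃ A₄ : ℕ} (hA₁ : 0 < A₁) (hA₂ : 0 < A₂) (hA₃ : 0 < A₃)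
    (hA₄ : 0 < A₄) {D R R' : ℝ} (hD : 0 < D) (hD₁ : 8 * D * √A₁ ≤ 1) (hD₂ : 8 * D * √A₂ ≤ 1)
    (hD₃ : 8 * D * √A₃ ≤ 1) (hD₄ : 8 * D * √A₄ ≤ 1) (hR : 4 ≤ R) (hR' : 4 ≤ R') (k : ℤ) :
    (#{p ∈ (dyadicBlock A₁ ×ˢ dyadicBlock A₄) ×ˢ (dyadicBlock A₂ ×ˢ dyadicBlock A₃) |
        sqrtWindow 1 D p.2 - sqrtWindow (-1) D p.1 = k} : ℝ) ≤
      R * (A₁ * A₄) +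
        √((R' * (A₁ * A₄) + richWindowBound A₁ A₄ D R') * richWindowBound A₂ A₃ D R) := by
  set r₁ : ℤ → ℝ := fun w ↦ windowCount A₁ A₄ (-1) D w
  set r₂ : ℤ → ℝ := fun w ↦ windowCount A₂ A₃ 1 D w
  have hr₁ (w : ℤ) : 0 ≤ r₁ w := Nat.cast_nonneg _
  rw [card_sqrtWindow_sub_eq]
  push_cast
  set V := (dyadicBlock A₁ ×ˢ dyadicBlock A₄).image (sqrtWindow (-1) D)
  set V' := {w ∈ V | R ≤ r₂ (w + k)}
  have hpoor : ∑ w ∈ V with ¬ R ≤ r₂ (w + k), r₁ w * r₂ (w + k) ≤ R * (A₁ * A₄) := by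
    refine (sum_mul_le_of_forall_le (by linarith) (filter_subset _ _) hr₁
      fun w hw ↦ (not_le.mp (mem_filter.mp hw).2).le).trans ?_
    gcongr
    exact sum_windowCount_le A₁ A₄ (-1) D V
  have hmoment₁ : ∑ w ∈ V', r₁ w ^ 2 ≤ R' * (A₁ * A₄) + richWindowBound A₁ A₄ D R' :=
    sum_sq_windowCount_le hA₁ hA₄ (by norm_num) hD hD₁ hD₄ hR' V'
  have hmoment₂ : ∑ w ∈ V', r₂ (w + k) ^ 2 ≤ richWindowBound A₂ A₃ D R := by
    rw [← sum_image (f := fun w ↦ r₂ w ^ 2) (g := fun w ↦ w + k) (add_left_injective k).injOn]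
    refine sum_sq_windowCount_le_of_le_windowCount hA₂ hA₃ (by norm_num) hD hD₂ hD₃ hR ?_
    exact forall_mem_image.mpr fun w hw ↦ (mem_filter.mp hw).2
  have hrich : ∑ w ∈ V', r₁ w * r₂ (w + k) ≤
      √((R' * (A₁ * A₄) + richWindowBound A₁ A₄ D R') * richWindowBound A₂ A₃ D R) := by
    refine le_sqrt_of_sq_le ((sum_mul_sq_le_sq_mul_sq V' _ _).trans ?_)
    exact mul_le_mul hmoment₁ hmoment₂ (by positivity)
      ((by positivity : (0 : ℝ) ≤ _).trans hmoment₁)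
  rw [← sum_filter_add_sum_filter_not V (fun w ↦ R ≤ r₂ (w + k)), add_comm]
  exact add_le_add hpoor hrich

/-! ### Quadratic congruences -/

theorem card_le_sum_of_card_fiber_le {ι κ : Type*} [DecidableEq κ] {S : Finset ι} {T : Finset κ}
    {φ : ι → κ} {f : κ → ℝ} (hφ : ∀ x ∈ S, φ x ∈ T)
    (hf : ∀ y ∈ T, (#{x ∈ S | φ x = y} : ℝ) ≤ f y) : (#S : ℝ) ≤ ∑ y ∈ T, f y := by
  rw [card_eq_sum_card_fiberwise hφ, Nat.cast_sum]
  exact sum_le_sum hf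

theorem card_le_of_dvd_two_mul_sub {S : Finset ℤ} {r : ℕ} {L : ℝ} (hr : 0 < r)
    (hL : 0 ≤ L) (hbound : ∀ p ∈ S, |(p : ℝ)| ≤ L)
    (hdvd : ∀ p ∈ S, ∀ p' ∈ S, (r : ℤ) ∣ 2 * (p - p')) : (#S : ℝ) ≤ 4 * L / r + 1 := by
  rcases S.eq_empty_or_nonempty with rfl | hne
  · simpa using by positivity
  have hr' : (0 : ℝ) < r := by exact_mod_cast hr
  have hmin := S.min'_mem hne
  have hquot : ∀ p ∈ S, ∃ z ∈ range (⌊4 * L / r⌋₊ + 1), 2 * (p - S.min' hne) = r * z := by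
    intro p hp
    obtain ⟨z, hz⟩ := hdvd p hp _ hmin
    have hz₀ : 0 ≤ z := by
      have := S.min'_le p hp
      exact nonneg_of_mul_nonneg_right (by omega) (by exact_mod_cast hr : (0 : ℤ) < r)
    lift z to ℕ using hz₀
    refine ⟨z, mem_range.mpr (Nat.lt_succ_of_le (Nat.le_floor ?_)), hz⟩
    have hz' : 2 * ((p : ℝ) - S.min' hne) = r * z := by exact_mod_cast hz
    rw [le_div_iff₀ hr']
    linarith [abs_le.mp (hbound p hp), abs_le.mp (hbound _ hmin)]
  choose! z hzmem hz using hquot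
  have hinj : Set.InjOn z S := fun p hp p' hp' hpp' ↦ by
    have := (hz p hp).trans (hpp' ▸ (hz p' hp').symm)
    omega
  have hcard := card_le_card_of_injOn z hzmem hinj
  rw [card_range] at hcard
  calc (#S : ℝ) ≤ ⌊4 * L / r⌋₊ + 1 := by exact_mod_cast hcard
    _ ≤ 4 * L / r + 1 := by gcongr; exact Nat.floor_le (by positivity)

theorem isCoprime_of_gcd_mul_mul_eq {g : ℕ} {a b : ℤ} (hg : 0 < g)
    (h : Int.gcd (g * a) (g * b) = g) : IsCoprime a b := by
  rw [Int.gcd_mul_left, Int.natAbs_natCast] at h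
  exact Int.isCoprime_iff_gcd_eq_one.mpr (Nat.eq_of_mul_eq_mul_left hg (by omega))

theorem natCast_dvd_and_dvd_of_gcd_eq {a b : ℤ} {i f : ℕ} (hi : 0 < i)
    (hgcd : Int.gcd a (i * f) = i) (hdvd : (i : ℤ) * f ∣ a * b) : (i : ℤ) ∣ a ∧ (f : ℤ) ∣ b := by
  have hia : (i : ℤ) ∣ a := by
    have := Int.gcd_dvd_left a (i * f)
    rwa [hgcd] at this
  obtain ⟨u, rfl⟩ := hia
  have hcop := isCoprime_of_gcd_mul_mul_eq hi hgcd
  refine ⟨dvd_mul_right _ _, hcop.symm.dvd_of_dvd_mul_left ?_⟩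
  rw [mul_assoc] at hdvd
  exact (mul_dvd_mul_iff_left (by exact_mod_cast hi.ne')).mp hdvd

theorem dvd_two_mul_sub_of_gcd_sub_eq {p₀ p p' c : ℤ} {i f : ℕ} (hi : 0 < i)
    (hcop : IsCoprime p (i * f)) (hp₀ : (i : ℤ) * f ∣ p₀ ^ 2 + c)
    (hp : (i : ℤ) * f ∣ p ^ 2 + c) (hp' : (i : ℤ) * f ∣ p' ^ 2 + c)
    (hgcd : Int.gcd (p - p₀) (i * f) = i) (hgcd' : Int.gcd (p' - p₀) (i * f) = i) :
    (i : ℤ) * f ∣ 2 * (p - p') := by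
  have hsplit : ∀ r : ℤ, (i : ℤ) * f ∣ r ^ 2 + c → Int.gcd (r - p₀) (i * f) = i →
      (i : ℤ) ∣ r - p₀ ∧ (f : ℤ) ∣ r + p₀ := fun r hr hrgcd ↦
    natCast_dvd_and_dvd_of_gcd_eq hi hrgcd <| by
      rw [show (r - p₀) * (r + p₀) = (r ^ 2 + c) - (p₀ ^ 2 + c) by ring]
      exact dvd_sub hr hp₀
  obtain ⟨hpi, hpf⟩ := hsplit p hp hgcd
  obtain ⟨hpi', hpf'⟩ := hsplit p' hp' hgcd'
  have hdiffi : (i : ℤ) ∣ p - p' := by simpa using dvd_sub hpi hpi'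
  have hdifff : (f : ℤ) ∣ p - p' := by simpa using dvd_sub hpf hpf'
  have hgcd_two : gcd (i : ℤ) f ∣ 2 := by
    have hleft := gcd_dvd_left (i : ℤ) f
    have hsum : gcd (i : ℤ) f ∣ 2 * p := by
      rw [show 2 * p = (p - p₀) + (p + p₀) by ring]
      exact dvd_add (hleft.trans hpi) ((gcd_dvd_right (i : ℤ) f).trans hpf)
    exact (hcop.symm.of_isCoprime_of_dvd_left (hleft.mul_right _)).dvd_of_dvd_mul_right hsum
  exact (gcd_mul_lcm (i : ℤ) f).symm.dvd.trans (mul_dvd_mul hgcd_two (lcm_dvd hdiffi hdifff))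

theorem card_sq_congruence_le {S : Finset ℤ} {q : ℕ} {c : ℤ} {L : ℝ} (hq : 0 < q) (hL : 0 ≤ L)
    (hcop : ∀ p ∈ S, IsCoprime p (q : ℤ)) (hbound : ∀ p ∈ S, |(p : ℝ)| ≤ L)
    (hdvd : ∀ p ∈ S, (q : ℤ) ∣ p ^ 2 + c) : (#S : ℝ) ≤ #q.divisors * (4 * L / q + 1) := by
  rcases S.eq_empty_or_nonempty with rfl | ⟨p₀, hp₀⟩
  · simpa using by positivity
  have hgcd : ∀ p ∈ S, Int.gcd (p - p₀) q ∈ q.divisors := fun p _ ↦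
    Nat.mem_divisors.mpr ⟨by exact_mod_cast Int.gcd_dvd_right (p - p₀) q, hq.ne'⟩
  rw [← nsmul_eq_mul, ← sum_const]
  refine card_le_sum_of_card_fiber_le hgcd fun i hi ↦ card_le_of_dvd_two_mul_sub hq hL
    (fun p hp ↦ hbound p (mem_filter.mp hp).1) fun p hp p' hp' ↦ ?_
  obtain ⟨hpS, hpi⟩ := mem_filter.mp hp
  obtain ⟨hpS', hpi'⟩ := mem_filter.mp hp'
  obtain ⟨f, rfl⟩ := (Nat.mem_divisors.mp hi).1
  push_cast at *
  exact dvd_two_mul_sub_of_gcd_sub_eq (Nat.pos_of_mem_divisors hi) (hcop p hpS) (hdvd p₀ hp₀)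
    (hdvd p hpS) (hdvd p' hpS') hpi hpi'

theorem card_sq_congruence_gcd_eq_le {S : Finset ℤ} {g q X : ℕ} {k : ℤ} (hg : 0 < g) (hq : 0 < q)
    (hgcd : ∀ U ∈ S, Int.gcd (g * q) U = g) (hbound : ∀ U ∈ S, |U| ≤ X * (g * q))
    (hdvd : ∀ U ∈ S, ((g : ℤ) * q) ^ 2 ∣ U ^ 2 + k) :
    (#S : ℝ) ≤ #(q ^ 2).divisors * (4 * X / q + 1) := by
  rcases S.eq_empty_or_nonempty with rfl | ⟨U₀, hU₀⟩
  · simpa using by positivity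
  have hgz : (0 : ℤ) < g := by exact_mod_cast hg
  have hgU : ∀ U ∈ S, ∃ p : ℤ, U = g * p := fun U hU ↦ by
    have := Int.gcd_dvd_right ((g : ℤ) * q) U
    rwa [hgcd U hU] at this
  obtain ⟨c, rfl⟩ : (g : ℤ) ^ 2 ∣ k := by
    obtain ⟨p, hp⟩ := hgU U₀ hU₀
    have hU₀k := (pow_dvd_pow_of_dvd (dvd_mul_right (g : ℤ) q) 2).trans (hdvd U₀ hU₀)
    rw [hp, mul_pow] at hU₀k
    exact (dvd_add_right (dvd_mul_right _ _)).mp hU₀k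
  choose! p hp using hgU
  have hinj : Set.InjOn p S := fun U hU V hV hUV ↦ by rw [hp U hU, hp V hV, hUV]
  have hcop : ∀ U ∈ S, IsCoprime (p U) (q : ℤ) := fun U hU ↦
    (isCoprime_of_gcd_mul_mul_eq hg (hp U hU ▸ hgcd U hU)).symm
  have hpbound : ∀ U ∈ S, |(p U : ℝ)| ≤ X * q := fun U hU ↦ by
    have := hbound U hU
    rw [hp U hU, abs_mul, abs_of_pos hgz, mul_left_comm] at this
    exact_mod_cast le_of_mul_le_mul_left this hgz
  have hpdvd : ∀ U ∈ S, ((q ^ 2 : ℕ) : ℤ) ∣ p U ^ 2 + c := fun U hU ↦ by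
    have := hdvd U hU
    rw [hp U hU, mul_pow, mul_pow, ← mul_add] at this
    exact_mod_cast (mul_dvd_mul_iff_left (pow_pos hgz 2).ne').mp this
  rw [← card_image_of_injOn hinj]
  have hcard := card_sq_congruence_le (S := S.image p) (q := q ^ 2) (L := X * q) (by positivity)
    (by positivity) (by simpa using fun U hU ↦ (hcop U hU).pow_right (n := 2))
    (by simpa using hpbound) (by simpa using hpdvd)
  convert hcard using 3
  push_cast
  field_simp

theorem card_sq_dvd_sq_add_gcd_eq_le {S : Finset (ℕ × ℤ)} {X g q : ℕ} {k : ℤ} (hg : 0 < g)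
    (hq : 0 < q) (hU : ∀ z ∈ S, |z.2| ≤ X * z.1) (hdvd : ∀ z ∈ S, (z.1 : ℤ) ^ 2 ∣ z.2 ^ 2 + k) :
    (#{z ∈ S | (Int.gcd z.1 z.2, z.1 / Int.gcd z.1 z.2) = (g, q)} : ℝ) ≤
      #(q ^ 2).divisors * (4 * X / q + 1) := by
  have hfst : ∀ z ∈ {z ∈ S | (Int.gcd z.1 z.2, z.1 / Int.gcd z.1 z.2) = (g, q)},
      z ∈ S ∧ z.1 = g * q ∧ Int.gcd z.1 z.2 = g := by
    intro z hz
    obtain ⟨hzS, hzgq⟩ := mem_filter.mp hz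
    obtain ⟨rfl, rfl⟩ := Prod.mk.inj hzgq
    have hgcd : Int.gcd z.1 z.2 ∣ z.1 := by exact_mod_cast Int.gcd_dvd_left (z.1 : ℤ) z.2
    exact ⟨hzS, (Nat.mul_div_cancel' hgcd).symm, rfl⟩
  rw [← card_image_of_injOn (f := Prod.snd) fun z hz w hw hzw ↦
    Prod.ext ((hfst z hz).2.1.trans (hfst w hw).2.1.symm) hzw]
  refine card_sq_congruence_gcd_eq_le (X := X) (k := k) hg hq ?_ ?_ ?_
  all_goals
    rw [forall_mem_image]
    intro z hz
    obtain ⟨hzS, hz₁, hzg⟩ := hfst z hz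
    rw [← Nat.cast_mul, ← hz₁]
  exacts [hzg, hU z hzS, hdvd z hzS]

theorem card_sq_dvd_sq_add_le {S : Finset (ℕ × ℤ)} {X : ℕ} {k : ℤ} {K : ℝ} (hk : k ≠ 0)
    (hK : ∀ q ∈ Icc 1 X, (#(q ^ 2).divisors : ℝ) ≤ K) (hM : ∀ z ∈ S, z.1 ∈ Icc 1 X)
    (hU : ∀ z ∈ S, |z.2| ≤ X * z.1) (hdvd : ∀ z ∈ S, (z.1 : ℤ) ^ 2 ∣ z.2 ^ 2 + k) :
    (#S : ℝ) ≤ #k.natAbs.divisors * (K * (4 * X * (1 + log X) + X)) := by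
  have hmaps : ∀ z ∈ S, (Int.gcd z.1 z.2, z.1 / Int.gcd z.1 z.2) ∈
      k.natAbs.divisors ×ˢ Icc 1 X := by
    intro z hz
    have hz₁ := mem_Icc.mp (hM z hz)
    have hgcd : Int.gcd z.1 z.2 ∣ z.1 := by exact_mod_cast Int.gcd_dvd_left (z.1 : ℤ) z.2
    have hsum : (Int.gcd z.1 z.2 : ℤ) ∣ z.2 ^ 2 + k :=
      ((Int.gcd_dvd_left _ _).trans (dvd_pow_self _ two_ne_zero)).trans (hdvd z hz)
    have hgcdk : (Int.gcd z.1 z.2 : ℤ) ∣ k :=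
      (dvd_add_right ((Int.gcd_dvd_right _ _).trans (dvd_pow_self _ two_ne_zero))).mp hsum
    exact mem_product.mpr ⟨Nat.mem_divisors.mpr ⟨Int.natCast_dvd.mp hgcdk, by simpa using hk⟩,
      mem_Icc.mpr ⟨Nat.div_pos (Nat.le_of_dvd hz₁.1 hgcd) (Nat.pos_of_dvd_of_pos hgcd hz₁.1),
        (Nat.div_le_self _ _).trans hz₁.2⟩⟩
  have hfiber : ∀ y ∈ k.natAbs.divisors ×ˢ Icc 1 X,
      (#{z ∈ S | (Int.gcd z.1 z.2, z.1 / Int.gcd z.1 z.2) = y} : ℝ) ≤ K * (4 * X / y.2 + 1) := by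
    rintro ⟨g, q⟩ hgq
    obtain ⟨hg, hq⟩ := mem_product.mp hgq
    exact (card_sq_dvd_sq_add_gcd_eq_le (Nat.pos_of_mem_divisors hg) (mem_Icc.mp hq).1 hU
      hdvd).trans (mul_le_mul_of_nonneg_right (hK q hq) (by positivity))
  calc (#S : ℝ) ≤ ∑ y ∈ k.natAbs.divisors ×ˢ Icc 1 X, K * (4 * X / y.2 + 1) :=
        card_le_sum_of_card_fiber_le hmaps hfiber
    _ = #k.natAbs.divisors * (K * (4 * X * (∑ q ∈ Icc 1 X, (1 : ℝ) / q) + X)) := by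
        rw [sum_product]
        simp only [sum_const, nsmul_eq_mul, ← mul_sum, sum_add_distrib, Nat.card_Icc, mul_one,
          div_eq_mul_one_div (4 * (X : ℝ)), Nat.add_sub_cancel]
    _ ≤ #k.natAbs.divisors * (K * (4 * X * (1 + log X) + X)) := by
        rcases X.eq_zero_or_pos with rfl | hX
        · simp
        have hK₀ : 0 ≤ K := (Nat.cast_nonneg _).trans (hK 1 (mem_Icc.mpr ⟨le_rfl, hX⟩))
        gcongr
        exact sum_Icc_one_div_le_one_add_log X

/-! ### The norm of `√a + √b + √c - √d` -/

/-- The linear form `√a + √b + √c - √d` whose small values have to be counted. -/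
def sqrtDefect : ℕ × ℕ × ℕ × ℕ → ℝ
  | (a, b, c, d) => √a + √b + √c - √d

/-- If `√a + √b + √c = √d`, then `linearDefect (a, b, c, d) = 2√(ab) + 2√(cd)`, as one sees by
squaring `√a + √b = √d - √c`. -/
def linearDefect : ℕ × ℕ × ℕ × ℕ → ℤ
  | (a, b, c, d) => c + d - a - b

/-- If `√a + √b + √c = √d` and `m = linearDefect (a, b, c, d)`, then
`crossDefect (a, b, c, d) = 4m√(ab)`, as one sees by squaring `m - 2√(ab) = 2√(cd)`. -/
def crossDefect : ℕ × ℕ × ℕ × ℕ → ℤ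
  | (a, b, c, d) => linearDefect (a, b, c, d) ^ 2 + 4 * (a * b) - 4 * (c * d)

/-- The product of the conjugates of `√a + √b + √c - √d` over all choices of signs of
`√a`, `√b`, `√c`, up to sign. -/
def defectNorm : ℕ × ℕ × ℕ × ℕ → ℤ
  | (a, b, c, d) => (4 * linearDefect (a, b, c, d)) ^ 2 * (a * b) - crossDefect (a, b, c, d) ^ 2

theorem defectNorm_eq_prod (a b c d : ℕ) {Δ : ℝ} (hΔ : sqrtDefect (a, b, c, d) = Δ) :
    (defectNorm (a, b, c, d) : ℝ) =
      Δ * (2 * √a - Δ) * (2 * √b - Δ) * (2 * √c - Δ) * (2 * √a + 2 * √b - Δ) *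
        (2 * √a + 2 * √c - Δ) * (2 * √b + 2 * √c - Δ) * (2 * √a + 2 * √b + 2 * √c - Δ) := by
  subst hΔ
  simp only [defectNorm, crossDefect, linearDefect, sqrtDefect]
  push_cast
  rw [← sq_sqrt a.cast_nonneg, ← sq_sqrt b.cast_nonneg, ← sq_sqrt c.cast_nonneg,
    ← sq_sqrt d.cast_nonneg]
  simp only [sqrt_sq (sqrt_nonneg _)]
  ring

theorem mul_eq_mul_of_defectNorm_eq {a b c d a' b' c' d' : ℕ}
    (hm : linearDefect (a, b, c, d) = linearDefect (a', b', c', d'))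
    (hm₀ : linearDefect (a', b', c', d') ≠ 0)
    (hU : crossDefect (a, b, c, d) = crossDefect (a', b', c', d'))
    (hk : defectNorm (a, b, c, d) = defectNorm (a', b', c', d')) : a * b = a' * b' := by
  simp only [defectNorm, hm, hU, sub_left_inj] at hk
  exact_mod_cast mul_left_cancel₀ (by positivity) hk

theorem eq_and_eq_of_add_eq_of_mul_eq {c d c' d' : ℤ} (hcd : c < d) (hcd' : c' < d')
    (hadd : c + d = c' + d') (hmul : c * d = c' * d') : c = c' ∧ d = d' := by
  have hroots : (c - c') * (c - d') = 0 := by linear_combination c * hadd - hmul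
  rcases mul_eq_zero.mp hroots with h | h <;> omega

theorem card_le_card_divisors_of_defects_eq {S : Finset (ℕ × ℕ × ℕ × ℕ)} {N : ℕ} {m U : ℤ}
    (hN : 0 < N) (hab : ∀ a b c d, (a, b, c, d) ∈ S → a * b = N)
    (hcd : ∀ a b c d, (a, b, c, d) ∈ S → c < d) (hm : ∀ n ∈ S, linearDefect n = m)
    (hU : ∀ n ∈ S, crossDefect n = U) : #S ≤ #N.divisors := by
  refine card_le_card_of_injOn Prod.fst ?_ ?_
  · rintro ⟨a, b, c, d⟩ hn
    exact Nat.mem_divisors.mpr ⟨⟨b, (hab a b c d hn).symm⟩, hN.ne'⟩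
  rintro ⟨a, b, c, d⟩ hn ⟨a', b', c', d'⟩ hn' (rfl : a = a')
  obtain rfl : b = b' := by
    have ha : 0 < a := Nat.pos_of_mul_pos_right ((hab a b c d hn).symm ▸ hN)
    exact Nat.eq_of_mul_eq_mul_left ha ((hab a b c d hn).trans (hab a b' c' d' hn').symm)
  have hadd : (c : ℤ) + d = c' + d' := by
    have := (hm _ hn).trans (hm _ hn').symm
    simp only [linearDefect] at this
    omega
  have hmul : (c : ℤ) * d = c' * d' := by
    have := (hU _ hn).trans (hU _ hn').symm
    simp only [crossDefect, (hm _ hn).trans (hm _ hn').symm] at this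
    omega
  obtain ⟨hc, hd⟩ := eq_and_eq_of_add_eq_of_mul_eq (by exact_mod_cast hcd a b c d hn)
    (by exact_mod_cast hcd a b c' d' hn') hadd hmul
  rw [Nat.cast_inj.mp hc, Nat.cast_inj.mp hd]

theorem sq_four_mul_linearDefect_dvd (n : ℕ × ℕ × ℕ × ℕ) :
    (4 * linearDefect n) ^ 2 ∣ crossDefect n ^ 2 + defectNorm n := by
  obtain ⟨a, b, c, d⟩ := n
  exact Dvd.intro (a * b : ℤ) (by rw [defectNorm]; ring)

theorem card_image_defects_le {S : Finset (ℕ × ℕ × ℕ × ℕ)} {X : ℕ} {k : ℤ} {K : ℝ} (hk : k ≠ 0)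
    (hK : ∀ q ∈ Icc 1 X, (#(q ^ 2).divisors : ℝ) ≤ K)
    (hm : ∀ n ∈ S, 0 < linearDefect n ∧ 4 * linearDefect n ≤ X)
    (hU : ∀ n ∈ S, |crossDefect n| ≤ X * (4 * linearDefect n))
    (hnorm : ∀ n ∈ S, defectNorm n = k) :
    (#(S.image fun n ↦ (linearDefect n, crossDefect n)) : ℝ) ≤
      #k.natAbs.divisors * (K * (4 * X * (1 + log X) + X)) := by
  have hinj : Set.InjOn (fun z : ℤ × ℤ ↦ ((4 * z.1).toNat, z.2))
      (S.image fun n ↦ (linearDefect n, crossDefect n)) := by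
    rintro ⟨m, U⟩ hz ⟨m', U'⟩ hz' hzz
    obtain ⟨n, hn, hnz⟩ := mem_image.mp hz
    obtain ⟨n', hn', hnz'⟩ := mem_image.mp hz'
    have := hm n hn
    have := hm n' hn'
    simp only [Prod.mk.injEq] at hzz hnz hnz' ⊢
    omega
  rw [← card_image_of_injOn hinj]
  refine card_sq_dvd_sq_add_le hk hK ?_ ?_ ?_
  all_goals
    rw [forall_mem_image, forall_mem_image]
    intro n hn
    have hpos := hm n hn
  · exact mem_Icc.mpr (by omega)
  all_goals rw [Int.toNat_of_nonneg (by omega)]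
  · exact hU n hn
  · exact hnorm n hn ▸ sq_four_mul_linearDefect_dvd n

theorem card_defectNorm_eq_le {S : Finset (ℕ × ℕ × ℕ × ℕ)} {X : ℕ} {k : ℤ} {K : ℝ} (hk : k ≠ 0)
    (hK : ∀ n, 1 ≤ n → n ≤ X ^ 2 → (#n.divisors : ℝ) ≤ K) (hkK : (#k.natAbs.divisors : ℝ) ≤ K)
    (hab : ∀ a b c d, (a, b, c, d) ∈ S → 0 < a * b ∧ a * b ≤ X ^ 2)
    (hcd : ∀ a b c d, (a, b, c, d) ∈ S → c < d)
    (hm : ∀ n ∈ S, 0 < linearDefect n ∧ 4 * linearDefect n ≤ X)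
    (hU : ∀ n ∈ S, |crossDefect n| ≤ X * (4 * linearDefect n))
    (hnorm : ∀ n ∈ S, defectNorm n = k) :
    (#S : ℝ) ≤ K ^ 3 * (4 * X * (1 + log X) + X) := by
  have himage := card_image_defects_le (K := K) hk (fun q hq ↦ hK _
    (Nat.one_le_pow _ _ (mem_Icc.mp hq).1) (Nat.pow_le_pow_left (mem_Icc.mp hq).2 2)) hm hU hnorm
  set I := S.image fun n ↦ (linearDefect n, crossDefect n)
  have hfiber : ∀ y ∈ I, (#{n ∈ S | (linearDefect n, crossDefect n) = y} : ℝ) ≤ K := by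
    rw [forall_mem_image]
    rintro ⟨a₀, b₀, c₀, d₀⟩ hn₀
    have hsame : ∀ n ∈ {n ∈ S | (linearDefect n, crossDefect n) =
        (linearDefect (a₀, b₀, c₀, d₀), crossDefect (a₀, b₀, c₀, d₀))}, n ∈ S ∧
        linearDefect n = linearDefect (a₀, b₀, c₀, d₀) ∧
        crossDefect n = crossDefect (a₀, b₀, c₀, d₀) := fun n hn ↦
      ⟨(mem_filter.mp hn).1, Prod.mk.inj (mem_filter.mp hn).2⟩
    obtain ⟨hpos, hle⟩ := hab _ _ _ _ hn₀
    refine le_trans ?_ (hK _ hpos hle)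
    exact_mod_cast card_le_card_divisors_of_defects_eq hpos
      (fun a b c d hn ↦ mul_eq_mul_of_defectNorm_eq (hsame _ hn).2.1 (hm _ hn₀).1.ne'
        (hsame _ hn).2.2 ((hnorm _ (hsame _ hn).1).trans (hnorm _ hn₀).symm))
      (fun a b c d hn ↦ hcd a b c d (hsame _ hn).1) (fun n hn ↦ (hsame n hn).2.1)
      (fun n hn ↦ (hsame n hn).2.2)
  have hK₀ : 0 ≤ K := (Nat.cast_nonneg _).trans hkK
  have : 0 ≤ log (X : ℝ) := log_natCast_nonneg X
  calc (#S : ℝ) ≤ ∑ _ ∈ I, K :=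
        card_le_sum_of_card_fiber_le (fun n hn ↦ mem_image_of_mem _ hn) hfiber
    _ = #I * K := by rw [sum_const, nsmul_eq_mul]
    _ ≤ K * (K * (4 * X * (1 + log X) + X)) * K := by grw [himage, hkK]
    _ = K ^ 3 * (4 * X * (1 + log X) + X) := by ring

/-! ### Comparable variables: counting through the norm -/

/-- The quadruples whose entries lie in the dyadic blocks of `A₁`, `A₂`, `A₃`, `A₄`. -/
def dyadicBox (A₁ A₂ A₃ A₄ : ℕ) : Finset (ℕ × ℕ × ℕ × ℕ) :=
  dyadicBlock A₁ ×ˢ dyadicBlock A₂ ×ˢ dyadicBlock A₃ ×ˢ dyadicBlock A₄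

theorem mem_dyadicBox {A₁ A₂ A₃ A₄ a b c d : ℕ} : (a, b, c, d) ∈ dyadicBox A₁ A₂ A₃ A₄ ↔
    a ∈ dyadicBlock A₁ ∧ b ∈ dyadicBlock A₂ ∧ c ∈ dyadicBlock A₃ ∧ d ∈ dyadicBlock A₄ := by
  simp only [dyadicBox, mem_product]

theorem defectNorm_ne_zero {a b c d : ℕ} (ha : 0 < a) (hb : 0 < b) (hc : 0 < c)
    (hΔ : sqrtDefect (a, b, c, d) ≠ 0) (hΔ₁ : |sqrtDefect (a, b, c, d)| < 1) :
    defectNorm (a, b, c, d) ≠ 0 := by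
  have ha' : 1 ≤ √(a : ℝ) := one_le_sqrt.mpr (by exact_mod_cast ha)
  have hb' : 1 ≤ √(b : ℝ) := one_le_sqrt.mpr (by exact_mod_cast hb)
  have hc' : 1 ≤ √(c : ℝ) := one_le_sqrt.mpr (by exact_mod_cast hc)
  have hprod := defectNorm_eq_prod a b c d rfl
  set Δ := sqrtDefect (a, b, c, d)
  have hΔ_lt := (abs_lt.mp hΔ₁).2
  rw [← Int.cast_ne_zero (α := ℝ), hprod]
  simp only [mul_ne_zero_iff]
  refine ⟨⟨⟨⟨⟨⟨⟨hΔ, ?_⟩, ?_⟩, ?_⟩, ?_⟩, ?_⟩, ?_⟩, ?_⟩ <;> linarith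

theorem abs_defectNorm_le {A₁ A₂ A₃ A₄ a b c d : ℕ} (hA₁ : 0 < A₁) (h₁₂ : A₁ ≤ A₂) (h₂₃ : A₂ ≤ A₃)
    (hn : (a, b, c, d) ∈ dyadicBox A₁ A₂ A₃ A₄) (hΔ₁ : |sqrtDefect (a, b, c, d)| < 1) :
    |(defectNorm (a, b, c, d) : ℝ)| ≤
      |sqrtDefect (a, b, c, d)| * (280000 * (√A₁ * A₂ * A₃ ^ 2)) := by
  obtain ⟨ha, hb, hc, -⟩ := mem_dyadicBox.mp hn
  have hA₁' : 1 ≤ √(A₁ : ℝ) := one_le_sqrt.mpr (by exact_mod_cast hA₁)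
  have h₁₂' : √(A₁ : ℝ) ≤ √A₂ := sqrt_le_sqrt (by exact_mod_cast h₁₂)
  have h₂₃' : √(A₂ : ℝ) ≤ √A₃ := sqrt_le_sqrt (by exact_mod_cast h₂₃)
  have ha₁ := sqrt_le_sqrt_of_mem_dyadicBlock ha
  have hb₁ := sqrt_le_sqrt_of_mem_dyadicBlock hb
  have hc₁ := sqrt_le_sqrt_of_mem_dyadicBlock hc
  have ha₂ := sqrt_le_mul_sqrt_of_mem_dyadicBlock ha
  have hb₂ := sqrt_le_mul_sqrt_of_mem_dyadicBlock hb
  have hc₂ := sqrt_le_mul_sqrt_of_mem_dyadicBlock hc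
  rw [defectNorm_eq_prod a b c d rfl]
  set Δ := sqrtDefect (a, b, c, d)
  obtain ⟨hΔ_gt, hΔ_lt⟩ := abs_lt.mp hΔ₁
  simp only [abs_mul]
  calc _ ≤ |Δ| * (4 * √A₁) * (4 * √A₂) * (4 * √A₃) * (7 * √A₂) * (7 * √A₃) * (7 * √A₃) *
        (10 * √A₃) := by
        gcongr <;> rw [abs_le] <;> constructor <;> linarith
    _ = |Δ| * (219520 * (√A₁ * √A₂ ^ 2 * (√A₃ ^ 2) ^ 2)) := by ring
    _ ≤ |Δ| * (280000 * (√A₁ * A₂ * A₃ ^ 2)) := by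
        rw [sq_sqrt A₂.cast_nonneg, sq_sqrt A₃.cast_nonneg]
        gcongr
        norm_num

theorem natAbs_defectNorm_le {A₁ A₂ A₃ A₄ a b c d : ℕ} (hA₁ : 0 < A₁) (h₁₂ : A₁ ≤ A₂)
    (h₂₃ : A₂ ≤ A₃) (hn : (a, b, c, d) ∈ dyadicBox A₁ A₂ A₃ A₄)
    (hΔ₁ : |sqrtDefect (a, b, c, d)| < 1) :
    (defectNorm (a, b, c, d)).natAbs ≤ 280000 * A₃ ^ 4 := by
  have hsqrt : √(A₁ : ℝ) ≤ A₃ := sqrt_le_left (by positivity) |>.mpr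
    (by exact_mod_cast (h₁₂.trans h₂₃).trans (Nat.le_self_pow two_ne_zero A₃))
  have : ((defectNorm (a, b, c, d)).natAbs : ℝ) ≤ 280000 * A₃ ^ 4 := by
    rw [Nat.cast_natAbs, Int.cast_abs]
    calc |(defectNorm (a, b, c, d) : ℝ)|
        ≤ |sqrtDefect (a, b, c, d)| * (280000 * (√A₁ * A₂ * A₃ ^ 2)) :=
          abs_defectNorm_le hA₁ h₁₂ h₂₃ hn hΔ₁
      _ ≤ 1 * (280000 * (A₃ * A₃ * A₃ ^ 2)) := by gcongr
      _ = 280000 * A₃ ^ 4 := by ring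
  exact_mod_cast this

theorem add_add_le_of_abs_sqrtDefect_lt_one {a b c d : ℕ} (ha : 0 < a) (hab : a ≤ 2 * b)
    (hac : a ≤ 2 * c) (hΔ : |sqrtDefect (a, b, c, d)| < 1) : a + b + c ≤ d := by
  have ha' : 1 ≤ √(a : ℝ) := one_le_sqrt.mpr (by exact_mod_cast ha)
  have hle : √(b : ℝ) + √c ≤ √d := by
    have := (abs_lt.mp hΔ).2
    rw [sqrtDefect] at this
    linarith
  have hmul : (a : ℝ) / 2 ≤ √b * √c := by
    have hab' : (a : ℝ) ≤ 2 * b := by exact_mod_cast hab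
    have hac' : (a : ℝ) ≤ 2 * c := by exact_mod_cast hac
    rw [← sqrt_mul b.cast_nonneg]
    exact le_sqrt_of_sq_le (by rw [sq]; gcongr <;> linarith)
  have hsq : (√(b : ℝ) + √c) ^ 2 ≤ √d ^ 2 := by gcongr
  rw [add_sq, sq_sqrt b.cast_nonneg, sq_sqrt c.cast_nonneg, sq_sqrt d.cast_nonneg] at hsq
  have : (a : ℝ) + b + c ≤ d := by linarith
  exact_mod_cast this

theorem linearDefect_bounds {A₁ A₂ A₃ A₄ a b c d : ℕ} (hA₁ : 0 < A₁) (h₁₂ : A₁ ≤ A₂)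
    (h₂₃ : A₂ ≤ A₃) (h₄₃ : A₄ ≤ 64 * A₃) (hn : (a, b, c, d) ∈ dyadicBox A₁ A₂ A₃ A₄)
    (hΔ : |sqrtDefect (a, b, c, d)| < 1) :
    2 * (c : ℤ) ≤ linearDefect (a, b, c, d) ∧ linearDefect (a, b, c, d) ≤ 130 * A₃ := by
  simp only [mem_dyadicBox, mem_dyadicBlock] at hn
  have := add_add_le_of_abs_sqrtDefect_lt_one (by omega) (by omega) (by omega) hΔ
  rw [linearDefect]
  omega

theorem abs_crossDefect_le {A₁ A₂ A₃ A₄ a b c d : ℕ} (hA₁ : 0 < A₁) (h₁₂ : A₁ ≤ A₂)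
    (h₂₃ : A₂ ≤ A₃) (h₄₃ : A₄ ≤ 64 * A₃) (hn : (a, b, c, d) ∈ dyadicBox A₁ A₂ A₃ A₄)
    (hΔ : |sqrtDefect (a, b, c, d)| < 1) :
    |crossDefect (a, b, c, d)| ≤ 520 * A₃ * (4 * linearDefect (a, b, c, d)) := by
  obtain ⟨hm_ge, hm_le⟩ := linearDefect_bounds hA₁ h₁₂ h₂₃ h₄₃ hn hΔ
  simp only [mem_dyadicBox, mem_dyadicBlock] at hn
  rw [crossDefect]
  set m := linearDefect (a, b, c, d)
  have hab : (a : ℤ) * b ≤ 2 * A₃ * m := by gcongr <;> omega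
  have hcd : (c : ℤ) * d ≤ m * (128 * A₃) := by gcongr <;> omega
  have hm_sq : m ^ 2 ≤ 130 * A₃ * m := by rw [sq]; gcongr; omega
  have hm₀ : 0 ≤ m ^ 2 := sq_nonneg m
  have hab₀ : (0 : ℤ) ≤ a * b := by positivity
  have hcd₀ : (0 : ℤ) ≤ c * d := by positivity
  rw [abs_le]
  constructor <;> linarith

theorem one_div_le_mul_two_div_one_add_abs {x R : ℝ} {k : ℤ} (hx : 0 < x) (hk : k ≠ 0)
    (hkx : |(k : ℝ)| ≤ x * R) : 1 / x ≤ 2 * R * (1 / (1 + |(k : ℝ)|)) := by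
  have hk₁ : (1 : ℝ) ≤ |(k : ℝ)| := by exact_mod_cast Int.one_le_abs hk
  rw [mul_one_div, div_le_div_iff₀ hx (by positivity)]
  linarith

/-- The quadruples of a dyadic box at which the square-root form is small but nonzero. -/
def smallDefectBox (A₁ A₂ A₃ A₄ : ℕ) : Finset (ℕ × ℕ × ℕ × ℕ) :=
  {n ∈ dyadicBox A₁ A₂ A₃ A₄ | sqrtDefect n ≠ 0 ∧ |sqrtDefect n| < 1}

theorem card_smallDefectBox_defectNorm_eq_le {A₁ A₂ A₃ A₄ : ℕ} {k : ℤ} {K : ℝ} (hA₁ : 0 < A₁)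
    (h₁₂ : A₁ ≤ A₂) (h₂₃ : A₂ ≤ A₃) (h₄₃ : A₄ ≤ 64 * A₃) (hk : k ≠ 0)
    (hK : ∀ n, 1 ≤ n → n ≤ (520 * A₃) ^ 2 → (#n.divisors : ℝ) ≤ K)
    (hkK : (#k.natAbs.divisors : ℝ) ≤ K) :
    (#{n ∈ smallDefectBox A₁ A₂ A₃ A₄ | defectNorm n = k} : ℝ) ≤
      K ^ 3 * (2080 * A₃ * (1 + log (520 * A₃)) + 520 * A₃) := by
  have hbox : ∀ n ∈ {n ∈ smallDefectBox A₁ A₂ A₃ A₄ | defectNorm n = k},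
      n ∈ dyadicBox A₁ A₂ A₃ A₄ ∧ |sqrtDefect n| < 1 := fun n hn ↦
    have hn' := mem_filter.mp (mem_filter.mp hn).1
    ⟨hn'.1, hn'.2.2⟩
  have hcard := card_defectNorm_eq_le
    (S := {n ∈ smallDefectBox A₁ A₂ A₃ A₄ | defectNorm n = k}) (X := 520 * A₃) hk hK hkK ?_ ?_ ?_ ?_
    (fun n hn ↦ (mem_filter.mp hn).2)
  · push_cast at hcard
    convert hcard using 4
    ring
  · intro a b c d hn
    have hmem := (hbox _ hn).1
    simp only [mem_dyadicBox, mem_dyadicBlock] at hmem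
    exact ⟨Nat.mul_pos (by omega) (by omega), by rw [sq]; gcongr <;> omega⟩
  · intro a b c d hn
    have hmem := (hbox _ hn).1
    simp only [mem_dyadicBox, mem_dyadicBlock] at hmem
    have := add_add_le_of_abs_sqrtDefect_lt_one (by omega) (by omega) (by omega) (hbox _ hn).2
    omega
  · rintro ⟨a, b, c, d⟩ hn
    have hmem := (hbox _ hn).1
    simp only [mem_dyadicBox, mem_dyadicBlock] at hmem
    have := linearDefect_bounds hA₁ h₁₂ h₂₃ h₄₃ (hbox _ hn).1 (hbox _ hn).2
    omega
  · rintro ⟨a, b, c, d⟩ hn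
    exact_mod_cast abs_crossDefect_le hA₁ h₁₂ h₂₃ h₄₃ (hbox _ hn).1 (hbox _ hn).2

theorem sum_smallDefectBox_le {A₁ A₂ A₃ A₄ : ℕ} {K : ℝ} (hA₁ : 0 < A₁) (h₁₂ : A₁ ≤ A₂)
    (h₂₃ : A₂ ≤ A₃) (h₄₃ : A₄ ≤ 64 * A₃)
    (hK : ∀ n, 1 ≤ n → n ≤ 280000 * A₃ ^ 4 → (#n.divisors : ℝ) ≤ K) :
    ∑ n ∈ smallDefectBox A₁ A₂ A₃ A₄, 1 / |sqrtDefect n| ≤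
      2 * (280000 * (√A₁ * A₂ * A₃ ^ 2)) *
        (K ^ 3 * (2080 * A₃ * (1 + log (520 * A₃)) + 520 * A₃) *
          (2 * (1 + log (280000 * A₃ ^ 4 + 1)))) := by
  set R : ℝ := 280000 * (√A₁ * A₂ * A₃ ^ 2)
  have hA₃ : 0 < A₃ := by omega
  have hK₀ : 0 ≤ K := (Nat.cast_nonneg _).trans
    (hK 1 le_rfl (by nlinarith [Nat.one_le_pow 4 A₃ hA₃]))
  have hnorm : ∀ n ∈ smallDefectBox A₁ A₂ A₃ A₄, defectNorm n ≠ 0 ∧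
      |(defectNorm n : ℝ)| ≤ |sqrtDefect n| * R ∧ (defectNorm n).natAbs ≤ 280000 * A₃ ^ 4 := by
    rintro ⟨a, b, c, d⟩ hn
    obtain ⟨hbox, hΔ, hΔ₁⟩ := mem_filter.mp hn
    have hA := hbox
    simp only [mem_dyadicBox, mem_dyadicBlock] at hA
    exact ⟨defectNorm_ne_zero (by omega) (by omega) (by omega) hΔ hΔ₁,
      abs_defectNorm_le hA₁ h₁₂ h₂₃ hbox hΔ₁, natAbs_defectNorm_le hA₁ h₁₂ h₂₃ hbox hΔ₁⟩
  have hlog : 0 ≤ log (520 * (A₃ : ℝ)) := by exact_mod_cast log_natCast_nonneg (520 * A₃)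
  calc ∑ n ∈ smallDefectBox A₁ A₂ A₃ A₄, 1 / |sqrtDefect n|
      ≤ ∑ n ∈ smallDefectBox A₁ A₂ A₃ A₄, 2 * R * (1 / (1 + |(defectNorm n : ℝ)|)) :=
        sum_le_sum fun n hn ↦ one_div_le_mul_two_div_one_add_abs
          (abs_pos.mpr (mem_filter.mp hn).2.1) (hnorm n hn).1 (hnorm n hn).2.1
    _ ≤ 2 * R * (K ^ 3 * (2080 * A₃ * (1 + log (520 * A₃)) + 520 * A₃) *
          (2 * (1 + log ((280000 * A₃ ^ 4 : ℕ) + 1)))) := by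
        rw [← mul_sum]
        refine mul_le_mul_of_nonneg_left (sum_one_div_one_add_abs_comp_le _ _ (by positivity)
          (fun n hn ↦ (hnorm n hn).2.2) fun k hkN ↦ ?_) (by positivity)
        rcases eq_or_ne k 0 with rfl | hk
        · rw [filter_eq_empty_iff.mpr fun n hn ↦ (hnorm n hn).1]
          simpa using by positivity
        · refine card_smallDefectBox_defectNorm_eq_le hA₁ h₁₂ h₂₃ h₄₃ hk (fun n hn hnA ↦ hK n hn ?_)
            (hK _ (Int.natAbs_pos.mpr hk) hkN)
          have : A₃ ^ 2 ≤ A₃ ^ 4 := Nat.pow_le_pow_right hA₃ (by norm_num)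
          nlinarith
    _ = _ := by push_cast; rfl

/-! ### Spread-out variables: counting through windows -/

/-- The index of the window of width `D` containing `√b + √c`, minus that of `√d - √a`: an integer
approximation to `(√a + √b + √c - √d) / D` at the quadruple `(a, b, c, d)`. -/
def defectWindow (D : ℝ) : ℕ × ℕ × ℕ × ℕ → ℤ
  | (a, b, c, d) => sqrtWindow 1 D (b, c) - sqrtWindow (-1) D (a, d)

theorem abs_sqrtDefect_div_sub_defectWindow_le (D : ℝ) (n : ℕ × ℕ × ℕ × ℕ) :
    |sqrtDefect n / D - defectWindow D n| ≤ 1 := by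
  obtain ⟨a, b, c, d⟩ := n
  have hsplit : sqrtDefect (a, b, c, d) / D = (√c + 1 * √b) / D - (√d + -1 * √a) / D := by
    rw [sqrtDefect]
    ring
  simp only [hsplit, defectWindow, sqrtWindow, Int.cast_sub]
  have h₁ := Int.floor_le ((√(c : ℝ) + 1 * √b) / D)
  have h₂ := Int.lt_floor_add_one ((√(c : ℝ) + 1 * √b) / D)
  have h₃ := Int.floor_le ((√(d : ℝ) + -1 * √a) / D)
  have h₄ := Int.lt_floor_add_one ((√(d : ℝ) + -1 * √a) / D)
  rw [abs_le]
  constructor <;> linarith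

theorem abs_sqrtDefect_le {A₁ A₂ A₃ A₄ : ℕ} {Y : ℝ} (h₁ : √(A₁ : ℝ) ≤ Y) (h₂ : √(A₂ : ℝ) ≤ Y)
    (h₃ : √(A₃ : ℝ) ≤ Y) (h₄ : √(A₄ : ℝ) ≤ Y) {n : ℕ × ℕ × ℕ × ℕ}
    (hn : n ∈ dyadicBox A₁ A₂ A₃ A₄) : |sqrtDefect n| ≤ 9 / 2 * Y := by
  obtain ⟨a, b, c, d⟩ := n
  obtain ⟨ha, hb, hc, hd⟩ := mem_dyadicBox.mp hn
  have ha' := sqrt_le_mul_sqrt_of_mem_dyadicBlock ha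
  have hb' := sqrt_le_mul_sqrt_of_mem_dyadicBlock hb
  have hc' := sqrt_le_mul_sqrt_of_mem_dyadicBlock hc
  have hd' := sqrt_le_mul_sqrt_of_mem_dyadicBlock hd
  have ha₀ := sqrt_nonneg (a : ℝ)
  have hb₀ := sqrt_nonneg (b : ℝ)
  have hc₀ := sqrt_nonneg (c : ℝ)
  have hd₀ := sqrt_nonneg (d : ℝ)
  rw [sqrtDefect, abs_le]
  constructor <;> linarith

theorem min_inv_abs_le_of_abs_div_sub_le {x D : ℝ} {k : ℤ} (hD : 0 < D) (hk : |x / D - k| ≤ 1) :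
    min (1 / (8 * D)) |x|⁻¹ ≤ 4 / D * (1 / (1 + |(k : ℝ)|)) := by
  have hkx : |(k : ℝ)| - 1 ≤ |x| / D := by
    have := abs_sub_abs_le_abs_sub (k : ℝ) (x / D)
    rw [abs_sub_comm, abs_div, abs_of_pos hD] at this
    linarith
  rw [div_mul_div_comm, mul_one]
  rcases le_or_gt |(k : ℝ)| 2 with hk₂ | hk₂
  · refine (min_le_left _ _).trans ?_
    rw [div_le_div_iff₀ (by positivity) (by positivity)]
    nlinarith
  · rw [le_div_iff₀ hD] at hkx
    have hx : 0 < |x| := by nlinarith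
    refine (min_le_right _ _).trans ?_
    rw [inv_eq_one_div, div_le_div_iff₀ hx (by positivity)]
    nlinarith

theorem card_defectWindow_eq_le (A₁ A₂ A₃ A₄ : ℕ) (D : ℝ) (k : ℤ) :
    #{n ∈ dyadicBox A₁ A₂ A₃ A₄ | defectWindow D n = k} ≤
      #{p ∈ (dyadicBlock A₁ ×ˢ dyadicBlock A₄) ×ˢ (dyadicBlock A₂ ×ˢ dyadicBlock A₃) |
        sqrtWindow 1 D p.2 - sqrtWindow (-1) D p.1 = k} := by
  refine card_le_card_of_injOn (fun n ↦ ((n.1, n.2.2.2), (n.2.1, n.2.2.1))) ?_ ?_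
  · rintro ⟨a, b, c, d⟩ hn
    obtain ⟨hbox, hnk⟩ := mem_filter.mp hn
    obtain ⟨ha, hb, hc, hd⟩ := mem_dyadicBox.mp hbox
    simp only [mem_coe, mem_filter, mem_product]
    exact ⟨⟨⟨ha, hd⟩, hb, hc⟩, hnk⟩
  · rintro ⟨a, b, c, d⟩ - ⟨a', b', c', d'⟩ - h
    simp only [Prod.mk.injEq] at h ⊢
    tauto

theorem sum_min_inv_abs_sqrtDefect_le {A₁ A₂ A₃ A₄ N : ℕ} {D M Y : ℝ} (hD : 0 < D)
    (h₁ : √(A₁ : ℝ) ≤ Y) (h₂ : √(A₂ : ℝ) ≤ Y) (h₃ : √(A₃ : ℝ) ≤ Y) (h₄ : √(A₄ : ℝ) ≤ Y)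
    (hN : 9 / 2 * Y / D + 1 ≤ N)
    (hM : ∀ k, (#{n ∈ dyadicBox A₁ A₂ A₃ A₄ | defectWindow D n = k} : ℝ) ≤ M) :
    ∑ n ∈ dyadicBox A₁ A₂ A₃ A₄, min (1 / (8 * D)) |sqrtDefect n|⁻¹ ≤
      4 / D * (M * (2 * (1 + log (N + 1)))) := by
  have hnatAbs : ∀ n ∈ dyadicBox A₁ A₂ A₃ A₄, (defectWindow D n).natAbs ≤ N := by
    intro n hn
    have hclose := abs_sqrtDefect_div_sub_defectWindow_le D n
    have habs := abs_sub_abs_le_abs_sub (defectWindow D n : ℝ) (sqrtDefect n / D)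
    rw [abs_sub_comm, abs_div, abs_of_pos hD] at habs
    have hsize : |sqrtDefect n| / D ≤ 9 / 2 * Y / D := by
      gcongr
      exact abs_sqrtDefect_le h₁ h₂ h₃ h₄ hn
    have : ((defectWindow D n).natAbs : ℝ) ≤ N := by
      rw [Nat.cast_natAbs, Int.cast_abs]
      linarith
    exact_mod_cast this
  calc ∑ n ∈ dyadicBox A₁ A₂ A₃ A₄, min (1 / (8 * D)) |sqrtDefect n|⁻¹
      ≤ ∑ n ∈ dyadicBox A₁ A₂ A₃ A₄, 4 / D * (1 / (1 + |(defectWindow D n : ℝ)|)) :=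
        sum_le_sum fun n _ ↦
          min_inv_abs_le_of_abs_div_sub_le hD (abs_sqrtDefect_div_sub_defectWindow_le D n)
    _ ≤ 4 / D * (M * (2 * (1 + log (N + 1)))) := by
        rw [← mul_sum]
        gcongr
        exact sum_one_div_one_add_abs_comp_le _ _ ((Nat.cast_nonneg _).trans (hM 0)) hnatAbs
          fun k _ ↦ hM k

/-! ### Twelfth roots of the block sizes -/

/-- `α` is the twelfth root of the positive integer `A ≤ τ ^ 6`. In terms of `α` the quantities
`√A` and `A ^ (3 / 4)` are monomials, and so are all bounds for the dyadic blocks. -/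
structure IsScale (τ α : ℝ) (A : ℕ) : Prop where
  one_le : 1 ≤ α
  cast_eq : (A : ℝ) = α ^ 12
  sq_le : α ^ 2 ≤ τ

namespace IsScale

variable {τ α β c : ℝ} {A B : ℕ}

theorem pos (hA : IsScale τ α A) : 0 < α := one_pos.trans_le hA.one_le

theorem one_le_tau (hA : IsScale τ α A) : 1 ≤ τ := (one_le_pow₀ hA.one_le).trans hA.sq_le

theorem nat_pos (hA : IsScale τ α A) : 0 < A := by
  have : (0 : ℝ) < A := hA.cast_eq ▸ pow_pos hA.pos 12
  exact_mod_cast this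

theorem sqrt_eq (hA : IsScale τ α A) : √(A : ℝ) = α ^ 6 := by
  rw [hA.cast_eq, pow_mul α 6 2, sqrt_sq (pow_nonneg hA.pos.le 6)]

theorem rpow_eq (hA : IsScale τ α A) : (A : ℝ) ^ ((3 : ℝ) / 4) = α ^ 9 := by
  rw [hA.cast_eq, ← rpow_natCast, ← rpow_mul hA.pos.le, ← rpow_natCast]
  norm_num

theorem pow_six_le (hA : IsScale τ α A) : α ^ 6 ≤ τ ^ 3 := by
  calc α ^ 6 = (α ^ 2) ^ 3 := by ring
    _ ≤ τ ^ 3 := by grw [hA.sq_le]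

theorem cast_le (hA : IsScale τ α A) : (A : ℝ) ≤ τ ^ 6 := by
  calc (A : ℝ) = (α ^ 2) ^ 6 := by rw [hA.cast_eq]; ring
    _ ≤ τ ^ 6 := by grw [hA.sq_le]

theorem eight_mul_mul_sqrt_le (hA : IsScale τ α A) : 8 * (1 / (8 * τ ^ 4)) * √(A : ℝ) ≤ 1 := by
  have hτ : 0 < τ := one_pos.trans_le hA.one_le_tau
  rw [hA.sqrt_eq]
  calc 8 * (1 / (8 * τ ^ 4)) * α ^ 6 = α ^ 6 / τ ^ 4 := by field_simp
    _ ≤ 1 := (div_le_one (by positivity)).mpr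
      (hA.pow_six_le.trans (pow_le_pow_right₀ hA.one_le_tau (by norm_num)))

theorem le_mul (hA : IsScale τ α A) (hB : IsScale τ β B) (hc : 0 ≤ c)
    (h : (A : ℝ) ≤ c ^ 12 * B) : α ≤ c * β := by
  rw [hA.cast_eq, hB.cast_eq, ← mul_pow] at h
  exact le_of_pow_le_pow_left₀ (by norm_num) (mul_nonneg hc hB.pos.le) h

theorem le (hA : IsScale τ α A) (hB : IsScale τ β B) (h : A ≤ B) : α ≤ β := by
  simpa using hA.le_mul hB zero_le_one (by simpa using h)

end IsScale

theorem exists_isScale {τ : ℝ} {A : ℕ} (hτ : 0 ≤ τ) (hA : 0 < A) (hAτ : (A : ℝ) ≤ τ ^ 6) :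
    ∃ α, IsScale τ α A := by
  have hroot : ((A : ℝ) ^ ((1 : ℝ) / 12)) ^ 12 = A := by
    rw [← rpow_natCast, ← rpow_mul A.cast_nonneg]
    norm_num
  refine ⟨(A : ℝ) ^ ((1 : ℝ) / 12), one_le_rpow (by exact_mod_cast hA) (by norm_num),
    hroot.symm, ?_⟩
  refine le_of_pow_le_pow_left₀ (n := 6) (by norm_num) hτ ?_
  rwa [← pow_mul, hroot]

/-! ### The regime `τ α ≤ β γ ^ 6` -/

section SpreadRegime

variable {α β γ ω τ : ℝ} {A₁ A₂ A₃ A₄ : ℕ}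

theorem mul_mul_le_pow_eight (hβ : 0 ≤ β) (hβγ : β ≤ γ) (hreg : τ * α ≤ β * γ ^ 6) :
    τ * α * β ≤ γ ^ 8 := by
  have hγ : 0 ≤ γ := hβ.trans hβγ
  calc τ * α * β ≤ β * γ ^ 6 * β := by gcongr
    _ ≤ γ * γ ^ 6 * γ := by gcongr
    _ = γ ^ 8 := by ring

theorem rich_window_product_le (hα : 1 ≤ α) (hαβ : α ≤ β) (hβγ : β ≤ γ) (hγτ : γ ^ 2 ≤ τ)
    (hreg : τ * α ≤ β * γ ^ 6) :
    (364 * (α ^ 18 * γ ^ 12) + 186624 * (α ^ 24 * γ ^ 18 / τ ^ 4)) *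
        (54 * (α ^ 2 * β ^ 20 * γ ^ 8) + 365 * (β ^ 24 * γ ^ 18 / τ ^ 4)) ≤
      (9000 * (α ^ 9 * β ^ 9 * γ ^ 18 / τ)) ^ 2 := by
  have hβ : 1 ≤ β := hα.trans hαβ
  have hγ : 1 ≤ γ := hβ.trans hβγ
  have hτ : 1 ≤ τ := (one_le_pow₀ hγ).trans hγτ
  have hταβ := mul_mul_le_pow_eight (by linarith) hβγ hreg
  have hαβτ : α * β ≤ τ := by
    calc α * β ≤ γ * γ := by gcongr; exact hαβ.trans hβγ
      _ ≤ τ := by rwa [← sq]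
  set Z := α ^ 18 * β ^ 18 * γ ^ 36 / τ ^ 2 with hZ
  have h₁₁ : α ^ 18 * γ ^ 12 * (α ^ 2 * β ^ 20 * γ ^ 8) ≤ Z := by
    rw [hZ, le_div_iff₀ (by positivity)]
    calc _ = (τ * α * β) ^ 2 * (α ^ 18 * β ^ 18 * γ ^ 20) := by ring
      _ ≤ (γ ^ 8) ^ 2 * (α ^ 18 * β ^ 18 * γ ^ 20) := by grw [hταβ]
      _ = _ := by ring
  have h₁₂ : α ^ 18 * γ ^ 12 * (β ^ 24 * γ ^ 18 / τ ^ 4) ≤ Z := by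
    rw [hZ, ← mul_div_assoc, div_le_div_iff₀ (by positivity) (by positivity)]
    calc _ = 1 * β ^ 6 * (α ^ 18 * β ^ 18 * γ ^ 30 * τ ^ 2) := by ring
      _ ≤ τ ^ 2 * γ ^ 6 * (α ^ 18 * β ^ 18 * γ ^ 30 * τ ^ 2) := by
        gcongr
        exact one_le_pow₀ hτ
      _ = _ := by ring
  have h₂₁ : α ^ 24 * γ ^ 18 / τ ^ 4 * (α ^ 2 * β ^ 20 * γ ^ 8) ≤ Z := by
    rw [hZ, div_mul_eq_mul_div, div_le_div_iff₀ (by positivity) (by positivity)]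
    calc _ = 1 * (α ^ 8 * β ^ 2) * (α ^ 18 * β ^ 18 * γ ^ 26 * τ ^ 2) := by ring
      _ ≤ τ ^ 2 * (γ ^ 8 * γ ^ 2) * (α ^ 18 * β ^ 18 * γ ^ 26 * τ ^ 2) := by
        gcongr
        exacts [one_le_pow₀ hτ, hαβ.trans hβγ]
      _ = _ := by ring
  have h₂₂ : α ^ 24 * γ ^ 18 / τ ^ 4 * (β ^ 24 * γ ^ 18 / τ ^ 4) ≤ Z := by
    rw [hZ, div_mul_div_comm, div_le_div_iff₀ (by positivity) (by positivity)]
    calc _ = (α * β) ^ 6 * (α ^ 18 * β ^ 18 * γ ^ 36 * τ ^ 2) := by ring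
      _ ≤ τ ^ 6 * (α ^ 18 * β ^ 18 * γ ^ 36 * τ ^ 2) := by grw [hαβτ]
      _ = _ := by ring
  have hZ₀ : 0 ≤ Z := by positivity
  have hsq : (9000 * (α ^ 9 * β ^ 9 * γ ^ 18 / τ)) ^ 2 = 81000000 * Z := by
    rw [hZ]
    ring
  linarith

theorem poor_window_bound_le (hα : 1 ≤ α) (hαβ : α ≤ β) (hβγ : β ≤ γ) (hτ : 0 < τ)
    (hreg : τ * α ≤ β * γ ^ 6) :
    (4 + β ^ 10 / (α ^ 2 * γ ^ 2)) * (α ^ 12 * γ ^ 12) ≤ 5 * (α ^ 9 * β ^ 9 * γ ^ 18 / τ) := by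
  have hβ : 1 ≤ β := hα.trans hαβ
  have hγ : 1 ≤ γ := hβ.trans hβγ
  have hfirst : α ^ 12 * γ ^ 12 ≤ α ^ 9 * β ^ 9 * γ ^ 18 / τ := by
    rw [le_div_iff₀ hτ]
    calc _ = τ * α * α ^ 2 * (α ^ 9 * γ ^ 12) := by ring
      _ ≤ β * γ ^ 6 * β ^ 2 * (α ^ 9 * γ ^ 12) := by grw [hreg, hαβ]
      _ = β ^ 3 * (α ^ 9 * γ ^ 18) := by ring
      _ ≤ β ^ 9 * (α ^ 9 * γ ^ 18) := by gcongr; norm_num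
      _ = _ := by ring
  have hsecond : β ^ 10 / (α ^ 2 * γ ^ 2) * (α ^ 12 * γ ^ 12) ≤ α ^ 9 * β ^ 9 * γ ^ 18 / τ := by
    rw [le_div_iff₀ hτ]
    calc _ = τ * α * β * (α ^ 9 * β ^ 9 * γ ^ 10) := by field_simp
      _ ≤ γ ^ 8 * (α ^ 9 * β ^ 9 * γ ^ 10) := by
        gcongr
        exact mul_mul_le_pow_eight (by linarith) hβγ hreg
      _ = _ := by ring
  linarith

theorem second_moment_bound_le (h₁ : IsScale τ α A₁) (hαγ : α ≤ γ)
    (hA₄ : (A₄ : ℝ) ≤ 64 * γ ^ 12) (hsqrt : √(A₄ : ℝ) ≤ 8 * γ ^ 6) :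
    4 * α ^ 6 * (A₁ * A₄) + richWindowBound A₁ A₄ (1 / (8 * τ ^ 4)) (4 * α ^ 6) ≤
      364 * (α ^ 18 * γ ^ 12) + 186624 * (α ^ 24 * γ ^ 18 / τ ^ 4) := by
  have hα := h₁.pos
  have hτ : 0 < τ := one_pos.trans_le h₁.one_le_tau
  rw [richWindowBound, h₁.sqrt_eq, h₁.cast_eq]
  calc _ ≤ 4 * α ^ 6 * (α ^ 12 * (64 * γ ^ 12)) +
        (54 * ((α ^ 12) ^ 3 * (8 * γ ^ 6 / α ^ 6)) / (4 * α ^ 6) +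
          2916 * (1 / (8 * τ ^ 4)) * (α ^ 12) ^ 2 * (64 * γ ^ 12 * (8 * γ ^ 6))) := by
        grw [hsqrt, hA₄]
    _ = 256 * (α ^ 18 * γ ^ 12) + 108 * (α ^ 18 * α ^ 6 * γ ^ 6) +
        186624 * (α ^ 24 * γ ^ 18 / τ ^ 4) := by
        field_simp
        ring
    _ ≤ 256 * (α ^ 18 * γ ^ 12) + 108 * (α ^ 18 * γ ^ 6 * γ ^ 6) +
        186624 * (α ^ 24 * γ ^ 18 / τ ^ 4) := by gcongr
    _ = _ := by ring

theorem richWindowBound_le (h₂ : IsScale τ β A₂) (h₃ : IsScale τ γ A₃) (hα : 0 < α) {R : ℝ}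
    (hR : β ^ 10 / (α ^ 2 * γ ^ 2) ≤ R) :
    richWindowBound A₂ A₃ (1 / (8 * τ ^ 4)) R ≤
      54 * (α ^ 2 * β ^ 20 * γ ^ 8) + 365 * (β ^ 24 * γ ^ 18 / τ ^ 4) := by
  have hβ := h₂.pos
  have hγ := h₃.pos
  have hτ : 0 < τ := one_pos.trans_le h₂.one_le_tau
  rw [richWindowBound, h₂.sqrt_eq, h₃.sqrt_eq, h₂.cast_eq, h₃.cast_eq]
  calc _ ≤ 54 * ((β ^ 12) ^ 3 * (γ ^ 6 / β ^ 6)) / (β ^ 10 / (α ^ 2 * γ ^ 2)) +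
        2920 * (1 / (8 * τ ^ 4)) * (β ^ 12) ^ 2 * (γ ^ 12 * γ ^ 6) := by
        gcongr
        norm_num
    _ = _ := by
        field_simp
        ring

theorem card_defectWindow_eq_le_of_spread (h₁ : IsScale τ α A₁) (h₂ : IsScale τ β A₂)
    (h₃ : IsScale τ γ A₃) (h₄ : IsScale τ ω A₄) (h₁₂ : A₁ ≤ A₂) (h₂₃ : A₂ ≤ A₃)
    (h₄₃ : A₄ ≤ 64 * A₃) (hreg : τ * α ≤ β * γ ^ 6) (k : ℤ) :
    (#{n ∈ dyadicBox A₁ A₂ A₃ A₄ | defectWindow (1 / (8 * τ ^ 4)) n = k} : ℝ) ≤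
      9320 * (α ^ 9 * β ^ 9 * γ ^ 18 / τ) := by
  have hα := h₁.pos
  have hβ := h₂.pos
  have hγ := h₃.pos
  have hτ : 0 < τ := one_pos.trans_le h₁.one_le_tau
  have hαβ := h₁.le h₂ h₁₂
  have hβγ := h₂.le h₃ h₂₃
  have hA₄ : (A₄ : ℝ) ≤ 64 * γ ^ 12 := by
    rw [← h₃.cast_eq]
    exact_mod_cast h₄₃
  have hsqrt : √(A₄ : ℝ) ≤ 8 * γ ^ 6 := (sqrt_le_left (by positivity)).mpr (by linarith)
  have hratio : 0 ≤ β ^ 10 / (α ^ 2 * γ ^ 2) := by positivity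
  set R := 4 + β ^ 10 / (α ^ 2 * γ ^ 2)
  have hrich : √((4 * α ^ 6 * (A₁ * A₄) + richWindowBound A₁ A₄ (1 / (8 * τ ^ 4)) (4 * α ^ 6)) *
      richWindowBound A₂ A₃ (1 / (8 * τ ^ 4)) R) ≤ 9000 * (α ^ 9 * β ^ 9 * γ ^ 18 / τ) := by
    refine (sqrt_le_left (by positivity)).mpr (le_trans ?_
      (rich_window_product_le h₁.one_le hαβ hβγ h₃.sq_le hreg))
    exact mul_le_mul (second_moment_bound_le h₁ (hαβ.trans hβγ) hA₄ hsqrt)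
      (richWindowBound_le h₂ h₃ hα (by linarith)) (by rw [richWindowBound]; positivity)
      (by positivity)
  have hpoor : R * (A₁ * A₄) ≤ 320 * (α ^ 9 * β ^ 9 * γ ^ 18 / τ) := by
    calc R * (A₁ * A₄) ≤ R * (α ^ 12 * (64 * γ ^ 12)) := by grw [hA₄, h₁.cast_eq]
      _ ≤ 320 * (α ^ 9 * β ^ 9 * γ ^ 18 / τ) := by
        linarith [poor_window_bound_le h₁.one_le hαβ hβγ hτ hreg]
  have hcount := card_sqrtWindow_sub_eq_le h₁.nat_pos h₂.nat_pos h₃.nat_pos h₄.nat_pos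
    (by positivity) h₁.eight_mul_mul_sqrt_le h₂.eight_mul_mul_sqrt_le
    h₃.eight_mul_mul_sqrt_le h₄.eight_mul_mul_sqrt_le (R := R) (R' := 4 * α ^ 6)
    (by linarith) (by linarith [one_le_pow₀ h₁.one_le (n := 6)]) k
  have hle : (#{n ∈ dyadicBox A₁ A₂ A₃ A₄ | defectWindow (1 / (8 * τ ^ 4)) n = k} : ℝ) ≤ _ :=
    Nat.cast_le.mpr (card_defectWindow_eq_le A₁ A₂ A₃ A₄ (1 / (8 * τ ^ 4)) k)
  linarith

end SpreadRegime

/-! ### The sum over one dyadic box -/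

/-- The sum of `min t (1 / |√a + √b + √c - √d|)` over a dyadic box. As `0⁻¹ = 0`, the quadruples
with `√a + √b + √c = √d` contribute nothing. -/
def boxSum (t : ℝ) (A₁ A₂ A₃ A₄ : ℕ) : ℝ :=
  ∑ n ∈ dyadicBox A₁ A₂ A₃ A₄, min t |sqrtDefect n|⁻¹

/-- `K` bounds the number of divisors and the logarithm of every positive integer up to `X`. -/
def IsDivisorLogBound (K X : ℝ) : Prop :=
  ∀ n : ℕ, 1 ≤ n → (n : ℝ) ≤ X → (#n.divisors : ℝ) ≤ K ∧ 1 + log n ≤ K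

theorem IsDivisorLogBound.one_le {K X : ℝ} (hK : IsDivisorLogBound K X) (hX : 1 ≤ X) : 1 ≤ K := by
  simpa using (hK 1 le_rfl (by simpa using hX)).2

theorem card_dyadicBox (A₁ A₂ A₃ A₄ : ℕ) :
    (#(dyadicBox A₁ A₂ A₃ A₄) : ℝ) = A₁ * (A₂ * (A₃ * A₄)) := by
  simp only [dyadicBox, card_product, card_dyadicBlock, Nat.cast_mul]

theorem boxSum_le_div {A₁ A₂ A₃ A₄ : ℕ} {t c : ℝ} (hc : 0 < c)
    (h : ∀ n ∈ dyadicBox A₁ A₂ A₃ A₄, c ≤ |sqrtDefect n|) :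
    boxSum t A₁ A₂ A₃ A₄ ≤ A₁ * (A₂ * (A₃ * A₄)) / c := by
  rw [← card_dyadicBox, div_eq_mul_inv, ← nsmul_eq_mul]
  exact sum_le_card_nsmul _ _ _ fun n hn ↦ (min_le_right _ _).trans (inv_anti₀ hc (h n hn))

theorem boxSum_le_card_add (t : ℝ) (A₁ A₂ A₃ A₄ : ℕ) :
    boxSum t A₁ A₂ A₃ A₄ ≤
      A₁ * (A₂ * (A₃ * A₄)) + ∑ n ∈ smallDefectBox A₁ A₂ A₃ A₄, 1 / |sqrtDefect n| := by
  rw [smallDefectBox, sum_filter, ← card_dyadicBox, ← nsmul_one, ← sum_const, ← sum_add_distrib]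
  refine sum_le_sum fun n _ ↦ (min_le_right _ _).trans ?_
  split_ifs with hn
  · rw [inv_eq_one_div]
    linarith
  · rw [add_zero]
    by_cases hΔ : sqrtDefect n = 0
    · simp only [hΔ, abs_zero, inv_zero, zero_le_one]
    · exact inv_le_one_of_one_le₀ (not_lt.mp fun hlt ↦ hn ⟨hΔ, hlt⟩)

section SortedBox

variable {α β γ ω τ K : ℝ} {A₁ A₂ A₃ A₄ : ℕ}

theorem boxSum_le_of_mul_pow_six_le {σ : ℝ} (h₁ : IsScale τ α A₁) (h₂ : IsScale τ β A₂)
    (h₃ : IsScale τ γ A₃) (h₄ : IsScale τ ω A₄) (hα : α ≤ σ) (hβ : β ≤ σ) (hγ : γ ≤ σ)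
    (hω : ω ≤ σ) (hσ : σ ^ 6 ≤ τ ^ 3)
    (hΔ : ∀ n ∈ dyadicBox A₁ A₂ A₃ A₄, 2 / 5 * σ ^ 6 ≤ |sqrtDefect n|) (t : ℝ) :
    boxSum t A₁ A₂ A₃ A₄ ≤ 5 / 2 * (τ ^ 3 * (α ^ 9 * β ^ 9 * γ ^ 9 * ω ^ 9)) := by
  have hα₀ := h₁.pos
  have hβ₀ := h₂.pos
  have hγ₀ := h₃.pos
  have hω₀ := h₄.pos
  have hσ₀ : 0 < σ := hα₀.trans_le hα
  refine (boxSum_le_div (by positivity) hΔ).trans ((div_le_iff₀ (by positivity)).mpr ?_)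
  rw [h₁.cast_eq, h₂.cast_eq, h₃.cast_eq, h₄.cast_eq]
  calc α ^ 12 * (β ^ 12 * (γ ^ 12 * ω ^ 12))
      = α ^ 9 * β ^ 9 * γ ^ 9 * ω ^ 9 * (α ^ 3 * β ^ 3 * γ ^ 3 * ω ^ 3) := by ring
    _ ≤ α ^ 9 * β ^ 9 * γ ^ 9 * ω ^ 9 * (σ ^ 3 * σ ^ 3 * σ ^ 3 * σ ^ 3) := by gcongr
    _ = σ ^ 6 * (σ ^ 6 * (α ^ 9 * β ^ 9 * γ ^ 9 * ω ^ 9)) := by ring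
    _ ≤ τ ^ 3 * (σ ^ 6 * (α ^ 9 * β ^ 9 * γ ^ 9 * ω ^ 9)) := by gcongr
    _ = _ := by ring

theorem boxSum_le_of_fourth_dominant (h₁ : IsScale τ α A₁) (h₂ : IsScale τ β A₂)
    (h₃ : IsScale τ γ A₃) (h₄ : IsScale τ ω A₄) (h₁₂ : A₁ ≤ A₂) (h₂₃ : A₂ ≤ A₃)
    (h₃₄ : 64 * A₃ ≤ A₄) (t : ℝ) :
    boxSum t A₁ A₂ A₃ A₄ ≤ 5 / 2 * (τ ^ 3 * (α ^ 9 * β ^ 9 * γ ^ 9 * ω ^ 9)) := by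
  refine boxSum_le_of_mul_pow_six_le h₁ h₂ h₃ h₄ (h₁.le h₄ (by omega)) (h₂.le h₄ (by omega))
    (h₃.le h₄ (by omega)) le_rfl h₄.pow_six_le ?_ t
  rintro ⟨a, b, c, d⟩ hn
  obtain ⟨ha, hb, hc, hd⟩ := mem_dyadicBox.mp hn
  have h₁₂' : √(A₁ : ℝ) ≤ √A₂ := sqrt_le_sqrt (by exact_mod_cast h₁₂)
  have h₂₃' : √(A₂ : ℝ) ≤ √A₃ := sqrt_le_sqrt (by exact_mod_cast h₂₃)
  have h₃₄' : 8 * √(A₃ : ℝ) ≤ √A₄ := by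
    refine le_sqrt_of_sq_le ?_
    rw [mul_pow, sq_sqrt A₃.cast_nonneg]
    norm_num
    exact_mod_cast h₃₄
  have ha' := sqrt_le_mul_sqrt_of_mem_dyadicBlock ha
  have hb' := sqrt_le_mul_sqrt_of_mem_dyadicBlock hb
  have hc' := sqrt_le_mul_sqrt_of_mem_dyadicBlock hc
  have hd' := sqrt_le_sqrt_of_mem_dyadicBlock hd
  rw [← h₄.sqrt_eq, sqrtDefect, le_abs]
  right
  linarith [sqrt_nonneg (A₄ : ℝ)]

theorem boxSum_le_of_third_dominant (h₁ : IsScale τ α A₁) (h₂ : IsScale τ β A₂)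
    (h₃ : IsScale τ γ A₃) (h₄ : IsScale τ ω A₄) (h₁₂ : A₁ ≤ A₂) (h₂₃ : A₂ ≤ A₃)
    (h₄₃ : 8 * A₄ ≤ A₃) (t : ℝ) :
    boxSum t A₁ A₂ A₃ A₄ ≤ 5 / 2 * (τ ^ 3 * (α ^ 9 * β ^ 9 * γ ^ 9 * ω ^ 9)) := by
  refine boxSum_le_of_mul_pow_six_le h₁ h₂ h₃ h₄ (h₁.le h₃ (by omega)) (h₂.le h₃ (by omega))
    le_rfl (h₄.le h₃ (by omega)) h₃.pow_six_le ?_ t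
  rintro ⟨a, b, c, d⟩ hn
  obtain ⟨-, -, hc, hd⟩ := mem_dyadicBox.mp hn
  have h₄₃' : 5 / 2 * √(A₄ : ℝ) ≤ √A₃ := by
    refine le_sqrt_of_sq_le ?_
    rw [mul_pow, sq_sqrt A₄.cast_nonneg]
    have : 8 * (A₄ : ℝ) ≤ A₃ := by exact_mod_cast h₄₃
    linarith [A₄.cast_nonneg (α := ℝ)]
  have hc' := sqrt_le_sqrt_of_mem_dyadicBlock hc
  have hd' := sqrt_le_mul_sqrt_of_mem_dyadicBlock hd
  rw [← h₃.sqrt_eq, sqrtDefect, le_abs]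
  left
  linarith [sqrt_nonneg (a : ℝ), sqrt_nonneg (b : ℝ)]

theorem pow_nine_le_mul_pow_nine (h₃ : IsScale τ γ A₃) (h₄ : IsScale τ ω A₄)
    (h₃₄ : A₃ ≤ 8 * A₄) : γ ^ 9 ≤ 6 * ω ^ 9 := by
  have hω := h₄.pos
  have hγω : γ ≤ 6 / 5 * ω := h₃.le_mul h₄ (by norm_num) (by
    have : (A₃ : ℝ) ≤ 8 * A₄ := by exact_mod_cast h₃₄
    linarith [A₄.cast_nonneg (α := ℝ)])
  calc γ ^ 9 ≤ (6 / 5 * ω) ^ 9 := by gcongr; exact h₃.pos.le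
    _ = (6 / 5) ^ 9 * ω ^ 9 := mul_pow _ _ 9
    _ ≤ 6 * ω ^ 9 := by gcongr; norm_num

theorem boxSum_le_of_spread (h₁ : IsScale τ α A₁) (h₂ : IsScale τ β A₂) (h₃ : IsScale τ γ A₃)
    (h₄ : IsScale τ ω A₄) (h₁₂ : A₁ ≤ A₂) (h₂₃ : A₂ ≤ A₃) (h₄₃ : A₄ ≤ 64 * A₃)
    (hreg : τ * α ≤ β * γ ^ 6) (hK : IsDivisorLogBound K (400000 * τ ^ 24)) :
    boxSum (τ ^ 4) A₁ A₂ A₃ A₄ ≤ 600000 * K * (τ ^ 3 * (α ^ 9 * β ^ 9 * γ ^ 18)) := by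
  have hα := h₁.pos
  have hβ := h₂.pos
  have hγ := h₃.pos
  have hτ : 1 ≤ τ := h₁.one_le_tau
  have hτ₇ : 1 ≤ τ ^ 7 := one_le_pow₀ hτ
  have hK₀ : 0 < K := one_pos.trans_le (hK.one_le (by linarith [one_le_pow₀ hτ (n := 24)]))
  have hcast : 1 / (8 * (1 / (8 * τ ^ 4))) = τ ^ 4 := by field_simp
  have hN : 9 / 2 * τ ^ 3 / (1 / (8 * τ ^ 4)) + 1 ≤ (⌈37 * τ ^ 7⌉₊ : ℝ) := by
    calc 9 / 2 * τ ^ 3 / (1 / (8 * τ ^ 4)) + 1 = 36 * τ ^ 7 + 1 := by field_simp; ring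
      _ ≤ 37 * τ ^ 7 := by linarith
      _ ≤ ⌈37 * τ ^ 7⌉₊ := Nat.le_ceil _
  have hlog : 1 + log (⌈37 * τ ^ 7⌉₊ + 1) ≤ K := by
    have hceil := Nat.ceil_lt_add_one (show 0 ≤ 37 * τ ^ 7 by positivity)
    have hpow : τ ^ 7 ≤ τ ^ 24 := pow_le_pow_right₀ hτ (by norm_num)
    have := (hK (⌈37 * τ ^ 7⌉₊ + 1) (by omega) (by push_cast; linarith)).2
    exact_mod_cast this
  have hsum := sum_min_inv_abs_sqrtDefect_le (D := 1 / (8 * τ ^ 4)) (by positivity)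
    (h₁.sqrt_eq.trans_le h₁.pow_six_le) (h₂.sqrt_eq.trans_le h₂.pow_six_le)
    (h₃.sqrt_eq.trans_le h₃.pow_six_le) (h₄.sqrt_eq.trans_le h₄.pow_six_le) hN
    (card_defectWindow_eq_le_of_spread h₁ h₂ h₃ h₄ h₁₂ h₂₃ h₄₃ hreg)
  rw [hcast] at hsum
  calc boxSum (τ ^ 4) A₁ A₂ A₃ A₄
      ≤ 4 / (1 / (8 * τ ^ 4)) * (9320 * (α ^ 9 * β ^ 9 * γ ^ 18 / τ) * (2 * K)) := by
        grw [hlog] at hsum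
        exact hsum
    _ = 596480 * K * (τ ^ 3 * (α ^ 9 * β ^ 9 * γ ^ 18)) := by field_simp; ring
    _ ≤ 600000 * K * (τ ^ 3 * (α ^ 9 * β ^ 9 * γ ^ 18)) := by gcongr; norm_num

theorem sum_smallDefectBox_le_of_compact (h₁ : IsScale τ α A₁) (h₂ : IsScale τ β A₂)
    (h₃ : IsScale τ γ A₃) (h₁₂ : A₁ ≤ A₂) (h₂₃ : A₂ ≤ A₃) (h₄₃ : A₄ ≤ 64 * A₃)
    (hreg : β * γ ^ 6 ≤ τ * α) (hK : IsDivisorLogBound K (400000 * τ ^ 24)) :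
    ∑ n ∈ smallDefectBox A₁ A₂ A₃ A₄, 1 / |sqrtDefect n| ≤
      3000000000 * K ^ 5 * (τ ^ 3 * (α ^ 9 * β ^ 9 * γ ^ 18)) := by
  have hα := h₁.pos
  have hβ := h₂.pos
  have hγ := h₃.pos
  have hτ : 1 ≤ τ := h₁.one_le_tau
  have hτ₂₄ : 1 ≤ τ ^ 24 := one_le_pow₀ hτ
  have hK₁ : 1 ≤ K := hK.one_le (by linarith)
  have hA₃ : (A₃ : ℝ) ≤ τ ^ 24 := h₃.cast_le.trans (pow_le_pow_right₀ hτ (by norm_num))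
  have hA₃_pow : (A₃ : ℝ) ^ 4 ≤ τ ^ 24 := by
    calc (A₃ : ℝ) ^ 4 ≤ (τ ^ 6) ^ 4 := by grw [h₃.cast_le]
      _ = τ ^ 24 := by ring
  have hdiv : ∀ n, 1 ≤ n → n ≤ 280000 * A₃ ^ 4 → (#n.divisors : ℝ) ≤ K := fun n hn hnA ↦ by
    have : (n : ℝ) ≤ 280000 * (A₃ : ℝ) ^ 4 := by exact_mod_cast hnA
    exact (hK n hn (by linarith)).1
  have hlog₁ : 1 + log (520 * A₃) ≤ K := by
    have := (hK (520 * A₃) (by linarith [h₃.nat_pos]) (by push_cast; linarith)).2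
    exact_mod_cast this
  have hlog₂ : 1 + log (280000 * A₃ ^ 4 + 1) ≤ K := by
    have := (hK (280000 * A₃ ^ 4 + 1) (by omega) (by push_cast; linarith)).2
    exact_mod_cast this
  have : 0 ≤ log (520 * (A₃ : ℝ)) := by exact_mod_cast log_natCast_nonneg (520 * A₃)
  have hlog₀' : 0 ≤ log (280000 * (A₃ : ℝ) ^ 4 + 1) := by
    exact_mod_cast log_natCast_nonneg (280000 * A₃ ^ 4 + 1)
  grw [sum_smallDefectBox_le h₁.nat_pos h₁₂ h₂₃ h₄₃ hdiv, hlog₁, hlog₂]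
  rw [h₁.sqrt_eq, h₂.cast_eq, h₃.cast_eq]
  have hconst : 520 * γ ^ 12 ≤ 520 * γ ^ 12 * K := le_mul_of_one_le_right (by positivity) hK₁
  calc _ ≤ 2 * (280000 * (α ^ 6 * β ^ 12 * (γ ^ 12) ^ 2)) *
        (K ^ 3 * (2080 * γ ^ 12 * K + 520 * γ ^ 12 * K) * (2 * K)) := by
        gcongr ?_ * (_ * (_ + ?_) * ?_)
    _ = 2912000000 * K ^ 5 * (α ^ 6 * β ^ 9 * γ ^ 18 * (β * γ ^ 6) ^ 3) := by ring
    _ ≤ 3000000000 * K ^ 5 * (α ^ 6 * β ^ 9 * γ ^ 18 * (τ * α) ^ 3) := by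
        gcongr
        norm_num
    _ = _ := by ring

theorem prod_le_of_compact (h₁ : IsScale τ α A₁) (h₂ : IsScale τ β A₂) (h₃ : IsScale τ γ A₃)
    (h₄ : IsScale τ ω A₄) (h₁₂ : A₁ ≤ A₂) (h₂₃ : A₂ ≤ A₃) (h₄₃ : A₄ ≤ 64 * A₃)
    (hreg : β * γ ^ 6 ≤ τ * α) :
    (A₁ : ℝ) * (A₂ * (A₃ * A₄)) ≤ 4 * (τ ^ 3 * (α ^ 9 * β ^ 9 * γ ^ 9 * ω ^ 9)) := by
  have hα := h₁.pos
  have hβ := h₂.pos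
  have hγ := h₃.pos
  have hω := h₄.pos
  have hαβ := h₁.le h₂ h₁₂
  have hβγ := h₂.le h₃ h₂₃
  have hτ : 0 < τ := one_pos.trans_le h₁.one_le_tau
  have hωγ : ω ≤ 3 / 2 * γ := h₄.le_mul h₃ (by norm_num) (by
    have : (A₄ : ℝ) ≤ 64 * A₃ := by exact_mod_cast h₄₃
    linarith [A₃.cast_nonneg (α := ℝ)])
  have hγτ : γ ^ 6 ≤ τ := by
    refine le_of_mul_le_mul_left ?_ hβ
    calc β * γ ^ 6 ≤ τ * α := hreg
      _ ≤ β * τ := by rw [mul_comm]; gcongr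
  have hprod : α * β * γ * ω ≤ 3 / 2 * τ := by
    calc α * β * γ * ω ≤ γ * γ * γ * (3 / 2 * γ) := by gcongr; exact hαβ.trans hβγ
      _ = 3 / 2 * γ ^ 4 := by ring
      _ ≤ 3 / 2 * γ ^ 6 := by gcongr; exacts [h₃.one_le, by norm_num]
      _ ≤ 3 / 2 * τ := by gcongr
  rw [h₁.cast_eq, h₂.cast_eq, h₃.cast_eq, h₄.cast_eq]
  calc α ^ 12 * (β ^ 12 * (γ ^ 12 * ω ^ 12))
      = (α * β * γ * ω) ^ 3 * (α ^ 9 * β ^ 9 * γ ^ 9 * ω ^ 9) := by ring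
    _ ≤ (3 / 2 * τ) ^ 3 * (α ^ 9 * β ^ 9 * γ ^ 9 * ω ^ 9) := by gcongr
    _ = 27 / 8 * (τ ^ 3 * (α ^ 9 * β ^ 9 * γ ^ 9 * ω ^ 9)) := by ring
    _ ≤ 4 * (τ ^ 3 * (α ^ 9 * β ^ 9 * γ ^ 9 * ω ^ 9)) := by gcongr; norm_num

theorem boxSum_le_of_sorted (h₁ : IsScale τ α A₁) (h₂ : IsScale τ β A₂) (h₃ : IsScale τ γ A₃)
    (h₄ : IsScale τ ω A₄) (h₁₂ : A₁ ≤ A₂) (h₂₃ : A₂ ≤ A₃)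
    (hK : IsDivisorLogBound K (400000 * τ ^ 24)) :
    boxSum (τ ^ 4) A₁ A₂ A₃ A₄ ≤ 10 ^ 11 * K ^ 5 * (τ ^ 3 * (α ^ 9 * β ^ 9 * γ ^ 9 * ω ^ 9)) := by
  have hα := h₁.pos
  have hβ := h₂.pos
  have hγ := h₃.pos
  have hω := h₄.pos
  have hτ : 1 ≤ τ := h₁.one_le_tau
  have hK₁ : 1 ≤ K := hK.one_le (by linarith [one_le_pow₀ hτ (n := 24)])
  have hK₅ : 1 ≤ K ^ 5 := one_le_pow₀ hK₁
  set P := τ ^ 3 * (α ^ 9 * β ^ 9 * γ ^ 9 * ω ^ 9) with hP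
  have hP₀ : 0 < P := by positivity
  have hKP : P ≤ K ^ 5 * P := le_mul_of_one_le_left hP₀.le hK₅
  rcases le_or_gt (64 * A₃) A₄ with h₃₄ | h₄₃
  · linarith [boxSum_le_of_fourth_dominant h₁ h₂ h₃ h₄ h₁₂ h₂₃ h₃₄ (τ ^ 4)]
  rcases le_or_gt (8 * A₄) A₃ with h₄₃' | h₃₄'
  · linarith [boxSum_le_of_third_dominant h₁ h₂ h₃ h₄ h₁₂ h₂₃ h₄₃' (τ ^ 4)]
  have hP_ge : τ ^ 3 * (α ^ 9 * β ^ 9 * γ ^ 18) ≤ 6 * P := by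
    calc τ ^ 3 * (α ^ 9 * β ^ 9 * γ ^ 18) = τ ^ 3 * (α ^ 9 * β ^ 9 * γ ^ 9 * γ ^ 9) := by ring
      _ ≤ τ ^ 3 * (α ^ 9 * β ^ 9 * γ ^ 9 * (6 * ω ^ 9)) := by
        gcongr
        exact pow_nine_le_mul_pow_nine h₃ h₄ h₃₄'.le
      _ = 6 * P := by rw [hP]; ring
  rcases le_total (β * γ ^ 6) (τ * α) with hreg | hreg
  · have hcard := prod_le_of_compact h₁ h₂ h₃ h₄ h₁₂ h₂₃ h₄₃.le hreg
    have hsmall := sum_smallDefectBox_le_of_compact h₁ h₂ h₃ h₁₂ h₂₃ h₄₃.le hreg hK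
    grw [hP_ge] at hsmall
    linarith [boxSum_le_card_add (τ ^ 4) A₁ A₂ A₃ A₄]
  · have hspread := boxSum_le_of_spread h₁ h₂ h₃ h₄ h₁₂ h₂₃ h₄₃.le hreg hK
    grw [hP_ge, le_self_pow₀ hK₁ (show 5 ≠ 0 by norm_num)] at hspread
    linarith

end SortedBox

theorem boxSum_swap₁₂ (t : ℝ) (A₁ A₂ A₃ A₄ : ℕ) :
    boxSum t A₁ A₂ A₃ A₄ = boxSum t A₂ A₁ A₃ A₄ := by
  refine sum_nbij' (fun n ↦ (n.2.1, n.1, n.2.2)) (fun n ↦ (n.2.1, n.1, n.2.2)) ?_ ?_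
    (fun _ _ ↦ rfl) (fun _ _ ↦ rfl) ?_
  · rintro ⟨a, b, c, d⟩ hn
    rw [mem_dyadicBox] at hn ⊢
    tauto
  · rintro ⟨a, b, c, d⟩ hn
    rw [mem_dyadicBox] at hn ⊢
    tauto
  · rintro ⟨a, b, c, d⟩ -
    simp only [sqrtDefect, add_comm √(a : ℝ)]

theorem boxSum_swap₂₃ (t : ℝ) (A₁ A₂ A₃ A₄ : ℕ) :
    boxSum t A₁ A₂ A₃ A₄ = boxSum t A₁ A₃ A₂ A₄ := by
  refine sum_nbij' (fun n ↦ (n.1, n.2.2.1, n.2.1, n.2.2.2))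
    (fun n ↦ (n.1, n.2.2.1, n.2.1, n.2.2.2)) ?_ ?_ (fun _ _ ↦ rfl) (fun _ _ ↦ rfl) ?_
  · rintro ⟨a, b, c, d⟩ hn
    rw [mem_dyadicBox] at hn ⊢
    tauto
  · rintro ⟨a, b, c, d⟩ hn
    rw [mem_dyadicBox] at hn ⊢
    tauto
  · rintro ⟨a, b, c, d⟩ -
    simp only [sqrtDefect, add_right_comm √(a : ℝ)]

section Box

variable {α β γ ω τ K : ℝ} {A₁ A₂ A₃ A₄ : ℕ}

theorem boxSum_le_of_le (h₁ : IsScale τ α A₁) (h₂ : IsScale τ β A₂) (h₃ : IsScale τ γ A₃)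
    (h₄ : IsScale τ ω A₄) (h₁₂ : A₁ ≤ A₂) (hK : IsDivisorLogBound K (400000 * τ ^ 24)) :
    boxSum (τ ^ 4) A₁ A₂ A₃ A₄ ≤ 10 ^ 11 * K ^ 5 * (τ ^ 3 * (α ^ 9 * β ^ 9 * γ ^ 9 * ω ^ 9)) := by
  rcases le_total A₂ A₃ with h₂₃ | h₃₂
  · exact boxSum_le_of_sorted h₁ h₂ h₃ h₄ h₁₂ h₂₃ hK
  rw [boxSum_swap₂₃]
  rcases le_total A₁ A₃ with h₁₃ | h₃₁
  · exact (boxSum_le_of_sorted h₁ h₃ h₂ h₄ h₁₃ h₃₂ hK).trans_eq (by ring)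
  · rw [boxSum_swap₁₂]
    exact (boxSum_le_of_sorted h₃ h₁ h₂ h₄ h₃₁ h₁₂ hK).trans_eq (by ring)

theorem boxSum_le (h₁ : IsScale τ α A₁) (h₂ : IsScale τ β A₂) (h₃ : IsScale τ γ A₃)
    (h₄ : IsScale τ ω A₄) (hK : IsDivisorLogBound K (400000 * τ ^ 24)) :
    boxSum (τ ^ 4) A₁ A₂ A₃ A₄ ≤ 10 ^ 11 * K ^ 5 * (τ ^ 3 * (α ^ 9 * β ^ 9 * γ ^ 9 * ω ^ 9)) := by
  rcases le_total A₁ A₂ with h₁₂ | h₂₁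
  · exact boxSum_le_of_le h₁ h₂ h₃ h₄ h₁₂ hK
  · rw [boxSum_swap₁₂]
    exact (boxSum_le_of_le h₂ h₁ h₃ h₄ h₂₁ hK).trans_eq (by ring)

end Box

/-! ### Summation over the dyadic boxes -/

theorem exists_isDivisorLogBound {δ : ℝ} (hδ : 0 < δ) :
    ∃ C : ℝ, 1 ≤ C ∧ ∀ τ : ℝ, 1 ≤ τ → IsDivisorLogBound (C * τ ^ δ) (400000 * τ ^ 24) := by
  have hδ' : 0 < δ / 24 := by positivity
  obtain ⟨C, hC, hdiv⟩ := exists_card_divisors_le_mul_rpow hδ'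
  set C' := 1 + 1 / (δ / 24)
  have hM : 1 ≤ (400000 : ℝ) ^ (δ / 24) := one_le_rpow (by norm_num) hδ'.le
  have hC'₀ : 0 ≤ C' := by positivity
  refine ⟨(C + C') * 400000 ^ (δ / 24), one_le_mul_of_one_le_of_one_le (by linarith) hM, ?_⟩
  intro τ hτ n hn hnX
  have hpow : (n : ℝ) ^ (δ / 24) ≤ 400000 ^ (δ / 24) * τ ^ δ := by
    calc (n : ℝ) ^ (δ / 24) ≤ (400000 * τ ^ 24) ^ (δ / 24) := by gcongr
      _ = 400000 ^ (δ / 24) * (τ ^ 24) ^ (δ / 24) := mul_rpow (by norm_num) (by positivity)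
      _ = 400000 ^ (δ / 24) * τ ^ δ := by
        rw [← rpow_natCast_mul (by positivity)]
        congr 2
        push_cast
        ring
  constructor
  · calc (#n.divisors : ℝ) ≤ C * (n : ℝ) ^ (δ / 24) := hdiv n
      _ ≤ (C + C') * (400000 ^ (δ / 24) * τ ^ δ) := by gcongr; linarith
      _ = (C + C') * 400000 ^ (δ / 24) * τ ^ δ := by ring
  · calc 1 + log n ≤ C' * (n : ℝ) ^ (δ / 24) :=
          one_add_log_le_mul_rpow hδ' (by exact_mod_cast hn)
      _ ≤ (C + C') * (400000 ^ (δ / 24) * τ ^ δ) := by gcongr; linarith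
      _ = (C + C') * 400000 ^ (δ / 24) * τ ^ δ := by ring

/-- The summand `d(a)d(b)d(c)d(d) (abcd)^(-3/4) min(T², T^(3/2) / |√a + √b + √c - √d|)` written in
terms of `τ = T^(1/8)`. It vanishes on the quadruples with `√a + √b + √c = √d`. -/
def weightedTerm (τ : ℝ) (n : ℕ × ℕ × ℕ × ℕ) : ℝ :=
  (#n.1.divisors * #n.2.1.divisors * #n.2.2.1.divisors * #n.2.2.2.divisors : ℝ) /
    (n.1 * n.2.1 * n.2.2.1 * n.2.2.2 : ℝ) ^ ((3 : ℝ) / 4) *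
      (τ ^ 12 * min (τ ^ 4) |sqrtDefect n|⁻¹)

section DyadicSum

variable {τ K : ℝ}

theorem weightedTerm_nonneg (τ : ℝ) (n : ℕ × ℕ × ℕ × ℕ) : 0 ≤ weightedTerm τ n := by
  have : 0 ≤ min (τ ^ 4) |sqrtDefect n|⁻¹ := le_min (by positivity) (by positivity)
  unfold weightedTerm
  positivity

theorem IsDivisorLogBound.card_divisors_le_of_mem_dyadicBlock {A n : ℕ} (hτ : 1 ≤ τ)
    (hK : IsDivisorLogBound K (400000 * τ ^ 24)) (hA : 0 < A) (hAτ : (A : ℝ) ≤ τ ^ 6)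
    (hn : n ∈ dyadicBlock A) : (#n.divisors : ℝ) ≤ K := by
  obtain ⟨hAn, hnA⟩ := mem_dyadicBlock.mp hn
  refine (hK n (hA.trans_le hAn) ?_).1
  have hnA' : (n : ℝ) ≤ 2 * A := by exact_mod_cast hnA.le
  have hpow : τ ^ 6 ≤ τ ^ 24 := pow_le_pow_right₀ hτ (by norm_num)
  have : 0 ≤ τ ^ 6 := by positivity
  linarith

theorem weightedTerm_le {α β γ ω : ℝ} {A₁ A₂ A₃ A₄ : ℕ} {n : ℕ × ℕ × ℕ × ℕ}
    (h₁ : IsScale τ α A₁) (h₂ : IsScale τ β A₂) (h₃ : IsScale τ γ A₃) (h₄ : IsScale τ ω A₄)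
    (hK : IsDivisorLogBound K (400000 * τ ^ 24)) (hn : n ∈ dyadicBox A₁ A₂ A₃ A₄) :
    weightedTerm τ n ≤
      K ^ 4 / (α ^ 9 * β ^ 9 * γ ^ 9 * ω ^ 9) * (τ ^ 12 * min (τ ^ 4) |sqrtDefect n|⁻¹) := by
  obtain ⟨a, b, c, d⟩ := n
  obtain ⟨ha, hb, hc, hd⟩ := mem_dyadicBox.mp hn
  have hα := h₁.pos
  have hβ := h₂.pos
  have hγ := h₃.pos
  have hω := h₄.pos
  have hτ := h₁.one_le_tau
  have : 0 ≤ min (τ ^ 4) |sqrtDefect (a, b, c, d)|⁻¹ := le_min (by positivity) (by positivity)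
  have hdiv {A n : ℕ} {ξ : ℝ} (hA : IsScale τ ξ A) (hn : n ∈ dyadicBlock A) :
      (#n.divisors : ℝ) ≤ K :=
    hK.card_divisors_le_of_mem_dyadicBlock hτ hA.nat_pos hA.cast_le hn
  have hpow {A n : ℕ} {ξ : ℝ} (hA : IsScale τ ξ A) (hn : n ∈ dyadicBlock A) :
      ξ ^ 9 ≤ (n : ℝ) ^ ((3 : ℝ) / 4) := by
    rw [← hA.rpow_eq]
    gcongr
    exact (mem_dyadicBlock.mp hn).1
  have hK₀ : 0 ≤ K := (Nat.cast_nonneg _).trans (hdiv h₁ ha)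
  refine mul_le_mul_of_nonneg_right (div_le_div₀ (by positivity) ?_ (by positivity) ?_)
    (by positivity)
  · calc (#a.divisors * #b.divisors * #c.divisors * #d.divisors : ℝ) ≤ K * K * K * K := by
          gcongr
          exacts [hdiv h₁ ha, hdiv h₂ hb, hdiv h₃ hc, hdiv h₄ hd]
      _ = K ^ 4 := by ring
  · rw [mul_rpow (by positivity) (by positivity), mul_rpow (by positivity) (by positivity),
      mul_rpow (by positivity) (by positivity)]
    gcongr
    exacts [hpow h₁ ha, hpow h₂ hb, hpow h₃ hc, hpow h₄ hd]

theorem sum_dyadicBox_weightedTerm_le {A₁ A₂ A₃ A₄ : ℕ} (hτ : 0 ≤ τ)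
    (hK : IsDivisorLogBound K (400000 * τ ^ 24)) (hA₁ : 0 < A₁) (hA₂ : 0 < A₂) (hA₃ : 0 < A₃)
    (hA₄ : 0 < A₄) (hA₁τ : (A₁ : ℝ) ≤ τ ^ 6) (hA₂τ : (A₂ : ℝ) ≤ τ ^ 6) (hA₃τ : (A₃ : ℝ) ≤ τ ^ 6)
    (hA₄τ : (A₄ : ℝ) ≤ τ ^ 6) :
    ∑ n ∈ dyadicBox A₁ A₂ A₃ A₄, weightedTerm τ n ≤ 10 ^ 11 * K ^ 9 * τ ^ 15 := by
  obtain ⟨α, h₁⟩ := exists_isScale hτ hA₁ hA₁τ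
  obtain ⟨β, h₂⟩ := exists_isScale hτ hA₂ hA₂τ
  obtain ⟨γ, h₃⟩ := exists_isScale hτ hA₃ hA₃τ
  obtain ⟨ω, h₄⟩ := exists_isScale hτ hA₄ hA₄τ
  have hα := h₁.pos
  have hβ := h₂.pos
  have hγ := h₃.pos
  have hω := h₄.pos
  calc ∑ n ∈ dyadicBox A₁ A₂ A₃ A₄, weightedTerm τ n
      ≤ ∑ n ∈ dyadicBox A₁ A₂ A₃ A₄, K ^ 4 / (α ^ 9 * β ^ 9 * γ ^ 9 * ω ^ 9) *
          (τ ^ 12 * min (τ ^ 4) |sqrtDefect n|⁻¹) :=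
        sum_le_sum fun n hn ↦ weightedTerm_le h₁ h₂ h₃ h₄ hK hn
    _ = K ^ 4 / (α ^ 9 * β ^ 9 * γ ^ 9 * ω ^ 9) * (τ ^ 12 * boxSum (τ ^ 4) A₁ A₂ A₃ A₄) := by
        rw [← mul_sum, ← mul_sum, boxSum]
    _ ≤ K ^ 4 / (α ^ 9 * β ^ 9 * γ ^ 9 * ω ^ 9) *
          (τ ^ 12 * (10 ^ 11 * K ^ 5 * (τ ^ 3 * (α ^ 9 * β ^ 9 * γ ^ 9 * ω ^ 9)))) := by
        gcongr
        exact boxSum_le h₁ h₂ h₃ h₄ hK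
    _ = 10 ^ 11 * K ^ 9 * τ ^ 15 := by field_simp

theorem mem_dyadicBlock_two_pow_log {n : ℕ} (hn : 0 < n) : n ∈ dyadicBlock (2 ^ Nat.log 2 n) := by
  refine mem_dyadicBlock.mpr ⟨Nat.pow_log_le_self 2 hn.ne', ?_⟩
  rw [← pow_succ']
  exact Nat.lt_pow_succ_log_self one_lt_two n

theorem log_two_add_one_le_two_mul {Y : ℕ} (hY : 0 < Y) (hYK : 1 + log Y ≤ K) :
    ((Nat.log 2 Y + 1 : ℕ) : ℝ) ≤ 2 * K := by
  have hpow : Nat.log 2 Y * log 2 ≤ log Y := by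
    rw [← log_pow]
    exact log_le_log (by positivity) (by exact_mod_cast Nat.pow_log_le_self 2 hY.ne')
  have hlog₂ := log_two_gt_d9
  have : (0 : ℝ) ≤ Nat.log 2 Y := Nat.cast_nonneg _
  push_cast
  nlinarith

/-- The exponents `(i, j, k, l)` of the dyadic box `[2^i, 2^(i+1)) × ⋯ × [2^l, 2^(l+1))` containing
a quadruple of positive integers. -/
def dyadicExponents (n : ℕ × ℕ × ℕ × ℕ) : ℕ × ℕ × ℕ × ℕ :=
  (Nat.log 2 n.1, Nat.log 2 n.2.1, Nat.log 2 n.2.2.1, Nat.log 2 n.2.2.2)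

theorem filter_dyadicExponents_eq_subset (Y i j k l : ℕ) :
    {n ∈ Icc 1 Y ×ˢ Icc 1 Y ×ˢ Icc 1 Y ×ˢ Icc 1 Y | dyadicExponents n = (i, j, k, l)} ⊆
      dyadicBox (2 ^ i) (2 ^ j) (2 ^ k) (2 ^ l) := by
  rintro ⟨a, b, c, d⟩ hn
  simp only [mem_filter, mem_product, mem_Icc, dyadicExponents, Prod.mk.injEq] at hn
  obtain ⟨⟨ha, hb, hc, hd⟩, rfl, rfl, rfl, rfl⟩ := hn
  exact mem_dyadicBox.mpr ⟨mem_dyadicBlock_two_pow_log ha.1, mem_dyadicBlock_two_pow_log hb.1,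
    mem_dyadicBlock_two_pow_log hc.1, mem_dyadicBlock_two_pow_log hd.1⟩

theorem sum_weightedTerm_le {Y : ℕ} (hτ : 1 ≤ τ) (hK : IsDivisorLogBound K (400000 * τ ^ 24))
    (hY : 0 < Y) (hYτ : (Y : ℝ) ≤ τ ^ 6) :
    ∑ n ∈ Icc 1 Y ×ˢ Icc 1 Y ×ˢ Icc 1 Y ×ˢ Icc 1 Y, weightedTerm τ n ≤
      16 * 10 ^ 11 * K ^ 13 * τ ^ 15 := by
  have hτ₀ : 0 ≤ τ := zero_le_one.trans hτ
  have hpow₂₄ : τ ^ 6 ≤ τ ^ 24 := pow_le_pow_right₀ hτ (by norm_num)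
  have hK₀ : 0 ≤ K := zero_le_one.trans (hK.one_le (by linarith [one_le_pow₀ hτ (n := 24)]))
  set R := range (Nat.log 2 Y + 1) with hR
  have hRK : (#R : ℝ) ≤ 2 * K := by
    rw [hR, card_range]
    exact log_two_add_one_le_two_mul hY (hK Y hY (by linarith [pow_nonneg hτ₀ 24])).2
  have hmem {n : ℕ} (hn : n ∈ Icc 1 Y) : Nat.log 2 n ∈ R :=
    mem_range_succ_iff.mpr (Nat.log_mono_right (mem_Icc.mp hn).2)
  have hmaps : ∀ n ∈ Icc 1 Y ×ˢ Icc 1 Y ×ˢ Icc 1 Y ×ˢ Icc 1 Y,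
      dyadicExponents n ∈ R ×ˢ R ×ˢ R ×ˢ R := fun n hn ↦ by
    simp only [mem_product] at hn
    simp only [dyadicExponents, mem_product, hmem hn.1, hmem hn.2.1, hmem hn.2.2.1, hmem hn.2.2.2,
      and_self]
  have hRτ {i : ℕ} (hi : i ∈ R) : ((2 ^ i : ℕ) : ℝ) ≤ τ ^ 6 :=
    le_trans (by exact_mod_cast Nat.pow_le_of_le_log hY.ne' (mem_range_succ_iff.mp hi)) hYτ
  have hbox : ∀ e ∈ R ×ˢ R ×ˢ R ×ˢ R,
      ∑ n ∈ Icc 1 Y ×ˢ Icc 1 Y ×ˢ Icc 1 Y ×ˢ Icc 1 Y with dyadicExponents n = e,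
        weightedTerm τ n ≤ 10 ^ 11 * K ^ 9 * τ ^ 15 := by
    rintro ⟨i, j, k, l⟩ he
    simp only [mem_product] at he
    exact (sum_le_sum_of_subset_of_nonneg (filter_dyadicExponents_eq_subset Y i j k l)
      fun n _ _ ↦ weightedTerm_nonneg τ n).trans
      (sum_dyadicBox_weightedTerm_le hτ₀ hK (by positivity) (by positivity) (by positivity)
        (by positivity) (hRτ he.1) (hRτ he.2.1) (hRτ he.2.2.1) (hRτ he.2.2.2))
  rw [← sum_fiberwise_of_maps_to hmaps]
  grw [sum_le_card_nsmul _ _ _ hbox]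
  simp only [nsmul_eq_mul, card_product, Nat.cast_mul]
  calc (#R : ℝ) * (#R * (#R * #R)) * (10 ^ 11 * K ^ 9 * τ ^ 15)
      ≤ 2 * K * (2 * K * (2 * K * (2 * K))) * (10 ^ 11 * K ^ 9 * τ ^ 15) := by gcongr
    _ = 16 * 10 ^ 11 * K ^ 13 * τ ^ 15 := by ring

end DyadicSum

section EighthRoot

variable {T : ℝ}

theorem rpow_one_div_eight_pow (hT : 0 ≤ T) (k : ℕ) :
    (T ^ ((1 : ℝ) / 8)) ^ k = T ^ ((k : ℝ) / 8) := by
  rw [← rpow_mul_natCast hT]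
  congr 1
  ring

theorem mul_rpow_pow_mul_pow_fifteen (hT : 0 < T) (C ε : ℝ) :
    (C * (T ^ ((1 : ℝ) / 8)) ^ (8 * ε / 13)) ^ 13 * (T ^ ((1 : ℝ) / 8)) ^ 15 =
      C ^ 13 * T ^ (2 - 1 / 8 + ε) := by
  have hε : ((T ^ ((1 : ℝ) / 8)) ^ (8 * ε / 13)) ^ 13 = T ^ ε := by
    rw [← rpow_mul hT.le, ← rpow_mul_natCast hT.le]
    congr 1
    push_cast
    ring
  rw [mul_pow, hε, rpow_one_div_eight_pow hT.le, mul_assoc, ← rpow_add hT]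
  congr 2
  push_cast
  ring

theorem ite_eq_weightedTerm (hT : 0 ≤ T) (n₁ n₂ n₃ n₄ : ℕ) :
    (if √(n₁ : ℝ) + √n₂ + √n₃ - √n₄ ≠ 0 then
      ((#n₁.divisors * #n₂.divisors * #n₃.divisors * #n₄.divisors : ℕ) : ℝ) /
        ((n₁ : ℝ) * n₂ * n₃ * n₄) ^ ((3 : ℝ) / 4) *
          min (T ^ 2) (T ^ ((3 : ℝ) / 2) / |√(n₁ : ℝ) + √n₂ + √n₃ - √n₄|)
      else 0) = weightedTerm (T ^ ((1 : ℝ) / 8)) (n₁, n₂, n₃, n₄) := by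
  have hT₁₂ : T ^ ((3 : ℝ) / 2) = (T ^ ((1 : ℝ) / 8)) ^ 12 := by
    rw [rpow_one_div_eight_pow hT]
    norm_num
  have hT₁₆ : T ^ 2 = (T ^ ((1 : ℝ) / 8)) ^ 12 * (T ^ ((1 : ℝ) / 8)) ^ 4 := by
    rw [← pow_add, rpow_one_div_eight_pow hT]
    norm_num
  rw [weightedTerm, mul_min_of_nonneg (_ ^ 4) _ (by positivity), ← hT₁₆, ← hT₁₂, ← div_eq_mul_inv]
  split_ifs with h
  · push_cast
    rfl
  · have h₀ : sqrtDefect (n₁, n₂, n₃, n₄) = 0 := not_not.mp h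
    rw [h₀, abs_zero, div_zero, min_eq_right (by positivity), mul_zero]

end EighthRoot

theorem offdiagonal_sum_bound_plus (ε : ℝ) (hε : 0 < ε) :
    ∃ C : ℝ, 0 < C ∧ ∀ T : ℝ, 10 ≤ T →
      (∑ n₁ ∈ Finset.Icc 1 ⌊T ^ ((3:ℝ)/4)⌋₊, ∑ n₂ ∈ Finset.Icc 1 ⌊T ^ ((3:ℝ)/4)⌋₊,
       ∑ n₃ ∈ Finset.Icc 1 ⌊T ^ ((3:ℝ)/4)⌋₊, ∑ n₄ ∈ Finset.Icc 1 ⌊T ^ ((3:ℝ)/4)⌋₊,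
        if Real.sqrt n₁ + Real.sqrt n₂ + Real.sqrt n₃ - Real.sqrt n₄ ≠ 0 then
          ((n₁.divisors.card * n₂.divisors.card * n₃.divisors.card * n₄.divisors.card : ℕ) : ℝ)
              / ((n₁ : ℝ) * n₂ * n₃ * n₄) ^ ((3:ℝ)/4)
            * min (T ^ 2) (T ^ ((3:ℝ)/2)
                / |Real.sqrt n₁ + Real.sqrt n₂ + Real.sqrt n₃ - Real.sqrt n₄|)
        else 0)
      ≤ C * T ^ (2 - 1/8 + ε) := by
  obtain ⟨C, hC, hK⟩ := exists_isDivisorLogBound (show 0 < 8 * ε / 13 by positivity)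
  refine ⟨16 * 10 ^ 11 * C ^ 13, by positivity, fun T hT ↦ ?_⟩
  have hT₀ : 0 < T := by linarith
  have hτ : 1 ≤ T ^ ((1 : ℝ) / 8) := one_le_rpow (by linarith) (by norm_num)
  have hT₆ : T ^ ((3 : ℝ) / 4) = (T ^ ((1 : ℝ) / 8)) ^ 6 := by
    rw [rpow_one_div_eight_pow hT₀.le]
    norm_num
  have hsum := sum_weightedTerm_le hτ (hK _ hτ)
    (Nat.floor_pos.mpr (one_le_pow₀ hτ (n := 6))) (Nat.floor_le (by positivity))
  rw [mul_assoc (16 * 10 ^ 11), mul_rpow_pow_mul_pow_fifteen hT₀, ← mul_assoc, ← hT₆] at hsum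
  simpa only [ite_eq_weightedTerm hT₀.le, sum_product] using hsum
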